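/- arXiv:1110.0919 — 2 statements merged into one kernel-verified Lean document; each statement's English description precedes it below -/
import Mathlib

section
/- (Solecki–Spinas) If E ⊆ ℕ^ℕ × ℕ^ℕ is an analytic set such that every vertical section E_a = {x : (a,x) ∈ E} is contained in a countable union of compact sets, then there exists a superperfect set P ⊆ ℕ^ℕ that is free for E, i.e. whenever x, y ∈ P and x ≠ y, then (x,y) ∉ E. -/
/-!
Call `H ⊆ X × ℕ^ℕ` generically bounded if a single function `f`, assigning to every finite
sequence `s` an upper semicontinuous, densely finite function `f s : X → ℕ∞`, satisfies
`y k ≤ f (y ↾ k) x` for all `(x, y) ∈ H` and all but finitely many `k`. These sets form a σ-ideal,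
because finitely many bounds can be replaced by their supremum.

An analytic `H`, the range of a continuous `φ`, is generically bounded as soon as its sections over
comeagrely many points are eventually dominated. Otherwise some node `s` has, over an open set,
arbitrarily large successors carrying a non-small part of `H`; this persists when the preimage under
`φ` is restricted to smaller and smaller cones. At a generic `x` the refinement can be iterated
without moving `x`, and yields a point `y` of the section at `x` which escapes any given bound.

Conversely a superperfect set free for a generically bounded set is built by fusion. Along a fixed
enumeration of its nodes, each node `u` is long enough to force a finite bound on `f v` over its
cone for all earlier nodes `v`, and each splitting value exceeds all the bounds forced so far. Any
two branches have nodes interleaved in the enumeration infinitely often, and each time this happens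
one branch jumps above the value of `f` at the other.
-/

open Set Filter Topology PiNat Encodable

section Cone

variable {α : Type*} {x y : ℕ → α} {l r s : List α} {w : ℕ → List α}

/-- The basic open set of sequences starting with the finite sequence `l`. As in `PiNat.res`,
finite sequences are written backwards, so that extending one means prepending to the list, and the
initial segments of `l` are its suffixes. -/
def cone (l : List α) : Set (ℕ → α) := {y | res y l.length = l}

theorem cone_nil : cone ([] : List α) = univ := by
  ext
  simp [cone]

theorem mem_cone_cons {a : α} : y ∈ cone (a :: l) ↔ y l.length = a ∧ y ∈ cone l := by
  simp [cone]

theorem mem_cone_res (y : ℕ → α) (n : ℕ) : y ∈ cone (res y n) := by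
  simp [cone]

theorem eq_of_mem_cone (hx : x ∈ cone l) (hy : y ∈ cone l) {i : ℕ} (hi : i < l.length) :
    x i = y i :=
  res_eq_res.1 (Eq.trans hx (Eq.symm hy)) hi

theorem mem_cone_of_forall_eq (hx : x ∈ cone l) (h : ∀ i < l.length, y i = x i) : y ∈ cone l :=
  (res_eq_res.2 h).trans hx

theorem image_cone_eq_iUnion {β : Type*} (φ : (ℕ → α) → β) (l : List α) :
    φ '' cone l = ⋃ a, φ '' cone (a :: l) := by
  rw [← image_iUnion]
  congr
  ext z
  simp [mem_cone_cons]

theorem cone_anti (h : r <:+ s) : cone s ⊆ cone r := by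
  obtain ⟨t, rfl⟩ := h
  induction t with
  | nil => exact subset_rfl
  | cons a t ih => exact fun y hy => ih (mem_cone_cons.1 hy).2

theorem cone_nonempty [Nonempty α] (l : List α) : (cone l).Nonempty := by
  induction l with
  | nil => simp [cone_nil]
  | cons a l ih =>
    obtain ⟨y, hy⟩ := ih
    refine ⟨Function.update y l.length a, mem_cone_cons.2 ⟨by simp, ?_⟩⟩
    exact mem_cone_of_forall_eq hy fun i hi => by simp [hi.ne]

theorem res_suffix_res (y : ℕ → α) {m n : ℕ} (h : m ≤ n) : res y m <:+ res y n := by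
  induction n, h using Nat.le_induction with
  | base => exact List.suffix_rfl
  | succ n _ ih => exact ih.trans (List.suffix_cons _ _)

theorem suffix_or_suffix_of_mem_cone (hr : y ∈ cone r) (hs : y ∈ cone s) : r <:+ s ∨ s <:+ r := by
  rw [← show res y r.length = r from hr, ← show res y s.length = s from hs]
  exact (le_total _ _).imp (res_suffix_res y) (res_suffix_res y)

theorem suffix_of_inter_cone_cons_nonempty {a b : α} (hab : a ≠ b)
    (ha : (cone r ∩ cone (a :: s)).Nonempty) (hb : (cone r ∩ cone (b :: s)).Nonempty) :
    r <:+ s := by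
  by_contra hrs
  have suffix_of_nonempty : ∀ c, (cone r ∩ cone (c :: s)).Nonempty → c :: s <:+ r := by
    rintro c ⟨y, hyr, hys⟩
    rcases suffix_or_suffix_of_mem_cone hyr hys with h | h
    · rcases List.suffix_cons_iff.1 h with rfl | h
      exacts [List.suffix_rfl, absurd h hrs]
    · exact h
  have hsuffix : a :: s <:+ b :: s := List.suffix_of_suffix_length_le
    (suffix_of_nonempty a ha) (suffix_of_nonempty b hb) (by simp)
  exact hab (List.cons.inj (hsuffix.eq_of_length (by simp))).1

theorem le_length_of_chain (hw : ∀ n, ∃ a, a :: w n <:+ w (n + 1)) (n : ℕ) : n ≤ (w n).length :=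
  (strictMono_nat_of_lt_succ fun k => by
    obtain ⟨a, ha⟩ := hw k
    simpa using ha.length_le : StrictMono fun k => (w k).length).le_apply

theorem antitone_cone_of_chain (hw : ∀ n, ∃ a, a :: w n <:+ w (n + 1)) :
    Antitone fun n => cone (w n) :=
  antitone_nat_of_succ_le fun n => by
    obtain ⟨a, ha⟩ := hw n
    exact cone_anti ((List.suffix_cons a _).trans ha)

theorem exists_forall_mem_cone_of_chain (hw : ∀ n, ∃ a, a :: w n <:+ w (n + 1)) :
    ∃ y, ∀ n, y ∈ cone (w n) := by
  have : Nonempty α := ⟨(hw 0).choose⟩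
  have hanti := antitone_cone_of_chain hw
  choose z hz using fun n => cone_nonempty (w n)
  refine ⟨fun i => z (i + 1) i, fun n => mem_cone_of_forall_eq (hz n) fun i hi => ?_⟩
  refine eq_of_mem_cone (l := w (min (i + 1) n)) (hanti (min_le_left _ _) (hz _))
    (hanti (min_le_right _ _) (hz _)) ?_
  rcases min_choice (i + 1) n with h | h <;> rw [h]
  exacts [le_length_of_chain hw (i + 1), hi]

variable [TopologicalSpace α] [DiscreteTopology α]

theorem isOpen_cone (l : List α) : IsOpen (cone l) := by
  refine isOpen_iff_mem_nhds.2 fun x hx => mem_of_superset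
    ((isOpen_cylinder (fun _ => α) x l.length).mem_nhds (self_mem_cylinder x _)) fun y hy => ?_
  exact mem_cone_of_forall_eq hx (mem_cylinder_iff.1 hy)

theorem hasBasis_nhds_of_chain (hw : ∀ n, ∃ a, a :: w n <:+ w (n + 1))
    (hy : ∀ n, y ∈ cone (w n)) : (𝓝 y).HasBasis (fun _ => True) fun n => cone (w n) := by
  refine ⟨fun U => ⟨fun hU => ?_, fun ⟨n, _, hn⟩ => mem_of_superset
    ((isOpen_cone _).mem_nhds (hy n)) hn⟩⟩
  obtain ⟨_, ⟨z, n, rfl⟩, hyz, hzU⟩ :=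
    (isTopologicalBasis_cylinders fun _ : ℕ => α).mem_nhds_iff.1 hU
  refine ⟨n, trivial, fun x hx => hzU (mem_cylinder_iff.2 fun i hi => ?_)⟩
  rw [eq_of_mem_cone hx (hy n) (hi.trans_le (le_length_of_chain hw n)), mem_cylinder_iff.1 hyz i hi]

theorem hasBasis_nhds_cone_res (y : ℕ → α) :
    (𝓝 y).HasBasis (fun _ => True) fun n => cone (res y n) :=
  hasBasis_nhds_of_chain (fun n => ⟨y n, List.suffix_rfl⟩) (mem_cone_res y)

theorem exists_extension_cone_subset {U : Set (ℕ → α)} (hU : U ∈ 𝓝 y) (hy : y ∈ cone l) :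
    ∃ l', l <:+ l' ∧ cone l' ⊆ U := by
  obtain ⟨n, -, hn⟩ := (hasBasis_nhds_cone_res y).mem_iff.1 hU
  refine ⟨res y (max l.length n), ?_, (cone_anti (res_suffix_res y (le_max_right _ _))).trans hn⟩
  have hsuffix := res_suffix_res y (le_max_left l.length n)
  rwa [show res y l.length = l from hy] at hsuffix

end Cone

section GenericallyFinite

variable {X : Type*} [TopologicalSpace X]

/-- Extended-natural-valued upper semicontinuous functions that are finite on a dense, hence
comeagre, set: the Baire category counterpart of almost everywhere finite functions. -/
structure IsGenericallyFinite (f : X → ℕ∞) : Prop where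
  upperSemicontinuous : UpperSemicontinuous f
  dense_lt_top : Dense {x | f x < ⊤}

theorem isGenericallyFinite_bot : IsGenericallyFinite (⊥ : X → ℕ∞) :=
  ⟨upperSemicontinuous_const, by simp⟩

theorem IsGenericallyFinite.sup {f g : X → ℕ∞} (hf : IsGenericallyFinite f)
    (hg : IsGenericallyFinite g) : IsGenericallyFinite (f ⊔ g) where
  upperSemicontinuous x b hb := by
    filter_upwards [hf.upperSemicontinuous x b (le_sup_left.trans_lt hb),
      hg.upperSemicontinuous x b (le_sup_right.trans_lt hb)] with y hfy hgy
    exact max_lt hfy hgy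
  dense_lt_top := by
    simpa only [Pi.sup_apply, sup_lt_iff, ofPred_and] using
      hf.dense_lt_top.inter_of_isOpen_left hg.dense_lt_top
        (hf.upperSemicontinuous.isOpen_preimage ⊤)

theorem isGenericallyFinite_finset_sup {ι : Type*} {f : ι → X → ℕ∞} (T : Finset ι)
    (hf : ∀ i ∈ T, IsGenericallyFinite (f i)) : IsGenericallyFinite (T.sup f) :=
  Finset.sup_induction isGenericallyFinite_bot (fun _ h _ h' => h.sup h') hf

end GenericallyFinite

section GenericallyBounded

variable {X : Type*} [TopologicalSpace X] {H H' : Set (X × (ℕ → ℕ))}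

/-- The σ-ideal of sets all of whose points `(x, y)` satisfy `y k ≤ f (res y k) x` for almost all
`k`, for one family `f` of generically finite functions indexed by finite sequences. -/
def GenericallyBounded (H : Set (X × (ℕ → ℕ))) : Prop :=
  ∃ f : List ℕ → X → ℕ∞, (∀ s, IsGenericallyFinite (f s)) ∧
    ∀ p ∈ H, ∀ᶠ k in atTop, (p.2 k : ℕ∞) ≤ f (res p.2 k) p.1

theorem genericallyBounded_empty : GenericallyBounded (∅ : Set (X × (ℕ → ℕ))) :=
  ⟨fun _ => ⊥, fun _ => isGenericallyFinite_bot, by simp⟩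

theorem GenericallyBounded.mono (h : GenericallyBounded H) (hsub : H' ⊆ H) :
    GenericallyBounded H' := by
  obtain ⟨f, hf, hbound⟩ := h
  exact ⟨f, hf, fun p hp => hbound p (hsub hp)⟩

theorem nonempty_of_not_genericallyBounded (h : ¬ GenericallyBounded H) : H.Nonempty := by
  rw [nonempty_iff_ne_empty]
  rintro rfl
  exact h genericallyBounded_empty

theorem genericallyBounded_iUnion {ι : Type*} [Countable ι] {H : ι → Set (X × (ℕ → ℕ))}
    (h : ∀ i, GenericallyBounded (H i)) : GenericallyBounded (⋃ i, H i) := by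
  choose f hf hbound using h
  obtain ⟨e, he⟩ := exists_injective_nat ι
  -- Only finitely many bounds are combined at each `s`, yet each is used at all long enough `s`.
  let T (s : List ℕ) : Finset ι := ((finite_Iic s.length).preimage he.injOn).toFinset
  refine ⟨fun s => (T s).sup fun i => f i s,
    fun s => isGenericallyFinite_finset_sup _ fun i _ => hf i s, fun p hp => ?_⟩
  obtain ⟨i, hi⟩ := mem_iUnion.1 hp
  filter_upwards [hbound i p hi, eventually_ge_atTop (e i)] with k hk hik
  have hiT : i ∈ T (res p.2 k) := by simpa [T] using hik
  exact hk.trans (Finset.le_sup (f := fun i => f i (res p.2 k)) hiT p.1)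

theorem GenericallyBounded.union (h : GenericallyBounded H) (h' : GenericallyBounded H') :
    GenericallyBounded (H ∪ H') := by
  rw [union_eq_iUnion]
  exact genericallyBounded_iUnion (Bool.forall_bool.2 ⟨h', h⟩)

theorem genericallyBounded_of_forall_nhds [SecondCountableTopology X]
    (h : ∀ p ∈ H, ∃ U ∈ 𝓝 p, GenericallyBounded (H ∩ U)) : GenericallyBounded H := by
  refine (HereditarilyLindelofSpace.isLindelof H).induction_on (fun s t hst ht => ht.mono hst)
    (fun S hS hbound => ?_) fun p hp => ?_
  · have := hS.to_subtype
    rw [sUnion_eq_iUnion]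
    exact genericallyBounded_iUnion fun s : S => hbound s s.2
  · obtain ⟨U, hU, hbound⟩ := h p hp
    exact ⟨H ∩ U, inter_mem_nhdsWithin H hU, hbound⟩

end GenericallyBounded

section UnboundedLocus

variable {X : Type*} [TopologicalSpace X] {H H' : Set (X × (ℕ → ℕ))} {r s : List ℕ}

theorem biSup_natCast_eq_top_iff {p : ℕ → Prop} :
    ⨆ (m : ℕ) (_ : p m), (m : ℕ∞) = ⊤ ↔ ∃ᶠ m in atTop, p m := by
  simp only [ENat.eq_top_iff_forall_gt, frequently_atTop', lt_iSup_iff, Nat.cast_lt, exists_prop,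
    gt_iff_lt, and_comm]

/-- The supremum, localised at `x`, of those `m` for which the part of `H` lying over
`cone (m :: s)` is not generically bounded. These functions are the natural candidates for
witnessing that `H` is generically bounded. -/
noncomputable def fiberHeight (H : Set (X × (ℕ → ℕ))) (s : List ℕ) (x : X) : ℕ∞ :=
  ⨅ U ∈ 𝓝 x, ⨆ (m : ℕ) (_ : ¬ GenericallyBounded (H ∩ U ×ˢ cone (m :: s))), (m : ℕ∞)

theorem fiberHeight_lt_iff {x : X} {b : ℕ∞} :
    fiberHeight H s x < b ↔ ∃ U ∈ 𝓝 x,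
      ⨆ (m : ℕ) (_ : ¬ GenericallyBounded (H ∩ U ×ˢ cone (m :: s))), (m : ℕ∞) < b := by
  simp only [fiberHeight, iInf_lt_iff, exists_prop]

theorem fiberHeight_eq_top_iff {x : X} :
    fiberHeight H s x = ⊤ ↔
      ∀ U ∈ 𝓝 x, ∃ᶠ m in atTop, ¬ GenericallyBounded (H ∩ U ×ˢ cone (m :: s)) := by
  simp only [fiberHeight, iInf_eq_top, biSup_natCast_eq_top_iff]

theorem upperSemicontinuous_fiberHeight (H : Set (X × (ℕ → ℕ))) (s : List ℕ) :
    UpperSemicontinuous (fiberHeight H s) := by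
  intro x b hb
  obtain ⟨U, hU, hlt⟩ := fiberHeight_lt_iff.1 hb
  filter_upwards [eventually_mem_nhds_iff.2 hU] with y hy
  exact fiberHeight_lt_iff.2 ⟨U, hy, hlt⟩

/-- The open set of points near which `H` has non-small parts over arbitrarily large one-step
extensions of `s`. -/
def unboundedLocus (H : Set (X × (ℕ → ℕ))) (s : List ℕ) : Set X :=
  interior {x | fiberHeight H s x = ⊤}

theorem frequently_not_genericallyBounded {x : X} (hx : x ∈ unboundedLocus H s) {U : Set X}
    (hU : U ∈ 𝓝 x) : ∃ᶠ m in atTop, ¬ GenericallyBounded (H ∩ U ×ˢ cone (m :: s)) := by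
  have htop : x ∈ {x | fiberHeight H s x = ⊤} := interior_subset hx
  exact fiberHeight_eq_top_iff.1 htop U hU

theorem unboundedLocus_mono (h : H ⊆ H') : unboundedLocus H s ⊆ unboundedLocus H' s :=
  interior_mono fun _ hx => fiberHeight_eq_top_iff.2 fun U hU =>
    (fiberHeight_eq_top_iff.1 hx U hU).mono fun _ hm hbound =>
      hm (hbound.mono (inter_subset_inter_left _ h))

theorem genericallyBounded_of_unboundedLocus_eq_empty [SecondCountableTopology X]
    (h : ∀ s, unboundedLocus H s = ∅) : GenericallyBounded H := by
  have hfinite : ∀ s, IsGenericallyFinite (fiberHeight H s) := fun s =>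
    ⟨upperSemicontinuous_fiberHeight H s, by
      simpa only [lt_top_iff_ne_top, ne_eq, ← compl_ofPred] using
        interior_eq_empty_iff_dense_compl.1 (h s)⟩
  let C : Set (X × (ℕ → ℕ)) :=
    {p | ∀ᶠ k in atTop, (p.2 k : ℕ∞) ≤ fiberHeight H (res p.2 k) p.1}
  have hC : GenericallyBounded (H ∩ C) := ⟨fiberHeight H, hfinite, fun _ hp => hp.2⟩
  have hdiff : GenericallyBounded (H \ C) := by
    refine genericallyBounded_of_forall_nhds fun p hp => ?_
    obtain ⟨k, hk⟩ := (not_eventually.1 hp.2).exists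
    obtain ⟨U, hU, hlt⟩ := fiberHeight_lt_iff.1 (not_le.1 hk)
    have hbound : GenericallyBounded (H ∩ U ×ˢ cone (p.2 k :: res p.2 k)) := by
      by_contra hnot
      exact hlt.not_ge (le_iSup₂_of_le (p.2 k) hnot le_rfl)
    refine ⟨U ×ˢ cone (res p.2 (k + 1)), prod_mem_nhds hU
      ((isOpen_cone _).mem_nhds (mem_cone_res _ _)), hbound.mono ?_⟩
    exact inter_subset_inter_left _ sdiff_subset
  simpa only [inter_union_sdiff] using hC.union hdiff

theorem suffix_of_mem_unboundedLocus {U : Set X} {x : X}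
    (hx : x ∈ unboundedLocus (H ∩ U ×ˢ cone r) s) : r <:+ s := by
  have hfreq : ∃ᶠ m in atTop, (cone r ∩ cone (m :: s)).Nonempty :=
    (frequently_not_genericallyBounded hx univ_mem).mono fun m hm => by
      obtain ⟨p, ⟨-, hpr⟩, hps⟩ := nonempty_of_not_genericallyBounded hm
      exact ⟨p.2, hpr.2, hps.2⟩
  obtain ⟨a, ha⟩ := hfreq.exists
  obtain ⟨b, hab, hb⟩ := frequently_atTop'.1 hfreq a
  exact suffix_of_inter_cone_cons_nonempty hab.ne ha hb

theorem mem_closure_of_mem_unboundedLocus {U : Set X} {V : Set (ℕ → ℕ)} {x : X}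
    (hx : x ∈ unboundedLocus (H ∩ U ×ˢ V) s) : x ∈ closure U := by
  refine mem_closure_iff_nhds.2 fun W hW => ?_
  obtain ⟨m, hm⟩ := (frequently_not_genericallyBounded hx hW).exists
  obtain ⟨p, ⟨-, hpU⟩, hpW⟩ := nonempty_of_not_genericallyBounded hm
  exact ⟨p.1, hpW.1, hpU.1⟩

theorem exists_unboundedLocus_of_not_genericallyBounded [SecondCountableTopology X] {U : Set X}
    (h : ¬ GenericallyBounded (H ∩ U ×ˢ cone r)) :
    ∃ s, r <:+ s ∧ (U ∩ unboundedLocus H s).Nonempty := by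
  obtain ⟨s, x, hx⟩ : ∃ s, (unboundedLocus (H ∩ U ×ˢ cone r) s).Nonempty := by
    by_contra! hempty
    exact h (genericallyBounded_of_unboundedLocus_eq_empty hempty)
  refine ⟨s, suffix_of_mem_unboundedLocus hx, ?_⟩
  rw [inter_comm]
  exact mem_closure_iff.1 (mem_closure_of_mem_unboundedLocus hx) _ isOpen_interior
    (unboundedLocus_mono inter_subset_left hx)

end UnboundedLocus

section AnalyticSets

variable {X : Type*} [TopologicalSpace X] {φ : (ℕ → ℕ) → X × (ℕ → ℕ)} {s t : List ℕ} {n : ℕ}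

/-- The points at which the branching of `φ '' cone t` at `s` reproduces itself: it passes to a
one-step extension of `t` and to an extension of `m :: s` for some `m > n`. -/
def extensionLocus (φ : (ℕ → ℕ) → X × (ℕ → ℕ)) (s t : List ℕ) (n : ℕ) : Set X :=
  {x | ∃ m > n, ∃ s' e, m :: s <:+ s' ∧ x ∈ unboundedLocus (φ '' cone (e :: t)) s'}

theorem isOpen_extensionLocus : IsOpen (extensionLocus φ s t n) := by
  refine isOpen_iff_mem_nhds.2 fun x ⟨m, hm, s', e, hs', hx⟩ => ?_
  filter_upwards [isOpen_interior.mem_nhds hx] with y hy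
  exact ⟨m, hm, s', e, hs', hy⟩

theorem unboundedLocus_subset_closure_extensionLocus [SecondCountableTopology X] :
    unboundedLocus (φ '' cone t) s ⊆ closure (extensionLocus φ s t n) := by
  intro x hx
  refine mem_closure_iff_nhds.2 fun U hU => ?_
  obtain ⟨m, hm, hnot⟩ := frequently_atTop'.1 (frequently_not_genericallyBounded hx hU) n
  obtain ⟨e, he⟩ : ∃ e, ¬ GenericallyBounded (φ '' cone (e :: t) ∩ U ×ˢ cone (m :: s)) := by
    by_contra! hbound
    rw [image_cone_eq_iUnion, iUnion_inter] at hnot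
    exact hnot (genericallyBounded_iUnion hbound)
  obtain ⟨s', hs', y, hyU, hy⟩ := exists_unboundedLocus_of_not_genericallyBounded he
  exact ⟨y, hyU, m, hm, s', e, hs', hy⟩

theorem eventually_residual_mem_of_mem_closure {D : Set X} (hD : IsOpen D) :
    ∀ᶠ x in residual X, x ∈ closure D → x ∈ D := by
  have hfrontier : IsMeagre (frontier D) := by
    refine (isClosed_frontier.isNowhereDense_iff.2 ?_).isMeagre
    rw [← frontier_compl, interior_frontier hD.isClosed_compl]
  filter_upwards [hfrontier] with x hx hxD
  by_contra hxn
  exact hx (hD.frontier_eq ▸ ⟨hxD, hxn⟩)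

theorem eventually_residual_mem_extensionLocus [SecondCountableTopology X]
    (φ : (ℕ → ℕ) → X × (ℕ → ℕ)) :
    ∀ᶠ x in residual X, ∀ s t n, x ∈ unboundedLocus (φ '' cone t) s →
      x ∈ extensionLocus φ s t n := by
  simp only [eventually_countable_forall]
  intro s t n
  filter_upwards [eventually_residual_mem_of_mem_closure isOpen_extensionLocus] with x hx hxs
  exact hx (unboundedLocus_subset_closure_extensionLocus hxs)

theorem apply_eq_of_forall_mem_unboundedLocus [T2Space X] (hφ : Continuous φ)
    {σ τ : ℕ → List ℕ} {x : X} {y z : ℕ → ℕ} (hσ : ∀ n, ∃ m, m :: σ n <:+ σ (n + 1))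
    (hτ : ∀ n, ∃ e, e :: τ n <:+ τ (n + 1)) (hy : ∀ n, y ∈ cone (σ n)) (hz : ∀ n, z ∈ cone (τ n))
    (hx : ∀ n, x ∈ unboundedLocus (φ '' cone (τ n)) (σ n)) : φ z = (x, y) := by
  have hne : (map φ (𝓝 z) ⊓ 𝓝 (x, y)).NeBot := by
    rw [nhds_prod_eq, ((hasBasis_nhds_of_chain hτ hz).map φ).inf_basis_neBot_iff
      ((𝓝 x).basis_sets.prod (hasBasis_nhds_of_chain hσ hy))]
    rintro i - ⟨U, j⟩ ⟨hU, -⟩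
    obtain ⟨m, hm⟩ := (frequently_not_genericallyBounded (hx (max i j)) hU).exists
    obtain ⟨_, ⟨z', hz', rfl⟩, hzU, hzσ⟩ := nonempty_of_not_genericallyBounded hm
    exact ⟨φ z', mem_image_of_mem φ (antitone_cone_of_chain hτ (le_max_left i j) hz'), hzU,
      antitone_cone_of_chain hσ (le_max_right i j) (cone_anti (List.suffix_cons _ _) hzσ)⟩
  exact eq_of_nhds_neBot (hne.mono (inf_le_inf_right _ hφ.continuousAt))

theorem exists_eventually_le_of_subset_iUnion_isCompact {S : Set (ℕ → ℕ)} {K : ℕ → Set (ℕ → ℕ)}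
    (hK : ∀ n, IsCompact (K n)) (hS : S ⊆ ⋃ n, K n) : ∃ g : ℕ → ℕ, ∀ y ∈ S, y ≤ᶠ[atTop] g := by
  have hbdd : ∀ n i, BddAbove (Function.eval i '' K n) := fun n i =>
    ((hK n).image (continuous_apply i)).bddAbove
  choose b hb using hbdd
  refine ⟨fun k => (Finset.range (k + 1)).sup fun n => b n k, fun y hy => ?_⟩
  obtain ⟨n, hn⟩ := mem_iUnion.1 (hS hy)
  filter_upwards [eventually_ge_atTop n] with k hk
  exact (hb n k (mem_image_of_mem _ hn)).trans
    (Finset.le_sup (f := fun n => b n k) (Finset.mem_range.2 (Nat.lt_succ_of_le hk)))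

theorem exists_chain_of_mem_unboundedLocus {x : X} (g : ℕ → ℕ)
    (hx : x ∈ unboundedLocus (φ '' cone t) s)
    (hext : ∀ s t n, x ∈ unboundedLocus (φ '' cone t) s → x ∈ extensionLocus φ s t n) :
    ∃ σ τ : ℕ → List ℕ, (∀ n, ∃ m > g (σ n).length, m :: σ n <:+ σ (n + 1)) ∧
      (∀ n, ∃ e, e :: τ n <:+ τ (n + 1)) ∧
      ∀ n, x ∈ unboundedLocus (φ '' cone (τ n)) (σ n) := by
  let Q := {q : List ℕ × List ℕ // x ∈ unboundedLocus (φ '' cone q.2) q.1}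
  have hstep : ∀ q : Q, ∃ q' : Q, (∃ m > g q.1.1.length, m :: q.1.1 <:+ q'.1.1) ∧
      ∃ e, e :: q.1.2 <:+ q'.1.2 := by
    rintro ⟨⟨s, t⟩, hq⟩
    obtain ⟨m, hm, s', e, hs', hx'⟩ := hext s t (g s.length) hq
    exact ⟨⟨(s', e :: t), hx'⟩, ⟨m, hm, hs'⟩, e, List.suffix_rfl⟩
  choose F hFs hFt using hstep
  let q : ℕ → Q := fun n => F^[n] ⟨(s, t), hx⟩
  have hq : ∀ n, q (n + 1) = F (q n) := fun n => Function.iterate_succ_apply' F n _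
  exact ⟨fun n => (q n).1.1, fun n => (q n).1.2, fun n => by simpa only [hq] using hFs (q n),
    fun n => by simpa only [hq] using hFt (q n), fun n => (q n).2⟩

theorem exists_mem_range_not_eventuallyLE [T2Space X] (hφ : Continuous φ) {x : X}
    (hx : x ∈ unboundedLocus (φ '' cone t) s)
    (hext : ∀ s t n, x ∈ unboundedLocus (φ '' cone t) s → x ∈ extensionLocus φ s t n)
    (g : ℕ → ℕ) : ∃ y, (x, y) ∈ range φ ∧ ¬ y ≤ᶠ[atTop] g := by
  obtain ⟨σ, τ, hσg, hτ, hlocus⟩ := exists_chain_of_mem_unboundedLocus g hx hext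
  have hσ : ∀ n, ∃ m, m :: σ n <:+ σ (n + 1) := fun n => (hσg n).imp fun _ h => h.2
  obtain ⟨y, hy⟩ := exists_forall_mem_cone_of_chain hσ
  obtain ⟨z, hz⟩ := exists_forall_mem_cone_of_chain hτ
  refine ⟨y, ⟨z, apply_eq_of_forall_mem_unboundedLocus hφ hσ hτ hy hz hlocus⟩, ?_⟩
  refine not_eventually.2 (frequently_atTop.2 fun n => ?_)
  obtain ⟨m, hm, hsuffix⟩ := hσg n
  have hval : y (σ n).length = m := (mem_cone_cons.1 (cone_anti hsuffix (hy (n + 1)))).1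
  exact ⟨(σ n).length, le_length_of_chain hσ n, by simpa only [hval, not_le] using hm⟩

theorem genericallyBounded_of_analyticSet [SecondCountableTopology X] [BaireSpace X] [T2Space X]
    {H : Set (X × (ℕ → ℕ))} (hH : MeasureTheory.AnalyticSet H)
    (hsec : ∀ᶠ x in residual X, ∃ g : ℕ → ℕ, ∀ y, (x, y) ∈ H → y ≤ᶠ[atTop] g) :
    GenericallyBounded H := by
  rw [MeasureTheory.AnalyticSet] at hH
  obtain rfl | ⟨φ, hφ, rfl⟩ := hH
  · exact genericallyBounded_empty
  by_contra hnot
  obtain ⟨s, hs⟩ : ∃ s, (unboundedLocus (φ '' cone []) s).Nonempty := by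
    by_contra! hempty
    rw [cone_nil, image_univ] at hempty
    exact hnot (genericallyBounded_of_unboundedLocus_eq_empty hempty)
  obtain ⟨x, hx, ⟨g, hg⟩, hext⟩ := (dense_of_mem_residual
    (hsec.and (eventually_residual_mem_extensionLocus φ))).inter_open_nonempty _ isOpen_interior hs
  obtain ⟨y, hy, hyg⟩ := exists_mem_range_not_eventuallyLE hφ hx hext g
  exact hyg (hg y hy)

end AnalyticSets

section Superperfect

/-- A system of nodes indexed by finite sequences, in which the nodes directly above a given one
have distinct first entries beyond it, namely their labels. It enumerates the splitting nodes of a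
tree; the label of the root is irrelevant. -/
structure BranchingScheme (α β : Type*) where
  node : List α → List β
  label : List α → β
  label_cons_node_suffix : ∀ a σ, label (a :: σ) :: node σ <:+ node (a :: σ)
  label_injective : ∀ σ, Function.Injective fun a => label (a :: σ)

namespace BranchingScheme

variable {α β : Type*} (S : BranchingScheme α β)

theorem node_chain (x : ℕ → α) (n : ℕ) :
    ∃ b, b :: S.node (res x n) <:+ S.node (res x (n + 1)) :=
  ⟨_, S.label_cons_node_suffix (x n) (res x n)⟩

/-- The branch through the nodes `S.node (res x n)`. -/
noncomputable def branch (x : ℕ → α) : ℕ → β :=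
  (exists_forall_mem_cone_of_chain (S.node_chain x)).choose

theorem branch_mem_cone (x : ℕ → α) (n : ℕ) : S.branch x ∈ cone (S.node (res x n)) :=
  (exists_forall_mem_cone_of_chain (S.node_chain x)).choose_spec n

theorem branch_apply_length (x : ℕ → α) (n : ℕ) :
    S.branch x (S.node (res x n)).length = S.label (res x (n + 1)) :=
  (mem_cone_cons.1 (cone_anti (S.label_cons_node_suffix (x n) (res x n))
    (S.branch_mem_cone x (n + 1)))).1

theorem le_length_node (x : ℕ → α) (n : ℕ) : n ≤ (S.node (res x n)).length :=
  le_length_of_chain (S.node_chain x) n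

theorem branch_injective : Function.Injective S.branch := by
  intro x y hxy
  refine res_injective (funext fun n => ?_)
  induction n with
  | zero => rfl
  | succ n ih =>
    have hlabel : S.label (x n :: res y n) = S.label (y n :: res y n) := by
      rw [← res_succ, ← S.branch_apply_length y n, ← hxy, ← ih, ← res_succ,
        S.branch_apply_length x n]
    rw [res_succ, res_succ, ih, S.label_injective _ hlabel]

variable [TopologicalSpace α] [DiscreteTopology α] [TopologicalSpace β] [DiscreteTopology β]

theorem continuous_branch : Continuous S.branch := by
  refine continuous_iff_continuousAt.2 fun x => ?_
  refine ((hasBasis_nhds_cone_res x).tendsto_iff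
    (hasBasis_nhds_of_chain (S.node_chain x) (S.branch_mem_cone x))).2 fun n _ =>
      ⟨n, trivial, fun y hy => ?_⟩
  have hres : res y n = res x n := by simpa [cone] using hy
  exact hres ▸ S.branch_mem_cone y n

theorem exists_le_nhds_of_tendsto_branch {F : Filter (ℕ → α)} [F.NeBot] {y : ℕ → β}
    (hF : Tendsto S.branch F (𝓝 y)) : ∃ x, F ≤ 𝓝 x := by
  have heval : ∀ i, ∀ᶠ x in F, S.branch x i = y i := fun i => by
    simpa using (((continuous_apply i).tendsto y).comp hF)
  have hres : ∀ n, ∃ σ, ∀ᶠ x in F, res x n = σ := by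
    intro n
    induction n with
    | zero => exact ⟨[], by simp⟩
    | succ n ih =>
      obtain ⟨σ, hσ⟩ := ih
      have hlabel : ∀ᶠ x in F, res x n = σ ∧ S.label (x n :: σ) = y (S.node σ).length := by
        filter_upwards [hσ, heval (S.node σ).length] with x hx hxy
        refine ⟨hx, ?_⟩
        rw [← hxy, ← hx, S.branch_apply_length, res_succ]
      obtain ⟨x₀, -, hx₀⟩ := hlabel.exists
      refine ⟨x₀ n :: σ, ?_⟩
      filter_upwards [hlabel] with x hx
      rw [res_succ, hx.1, S.label_injective σ (hx.2.trans hx₀.symm)]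
  have hconst : ∀ i, ∃ a, ∀ᶠ x in F, x i = a := by
    intro i
    obtain ⟨σ, hσ⟩ := hres (i + 1)
    obtain ⟨x₀, hx₀⟩ := hσ.exists
    refine ⟨x₀ i, ?_⟩
    filter_upwards [hσ] with x hx
    exact res_eq_res.1 (hx.trans hx₀.symm) (Nat.lt_succ_self i)
  choose x hx using hconst
  exact ⟨x, tendsto_pi_nhds.2 fun i => by simpa using hx i⟩

theorem isClosedEmbedding_branch : IsClosedEmbedding S.branch := by
  have hproper : IsProperMap S.branch := isProperMap_iff_ultrafilter_of_t2.2
    ⟨S.continuous_branch, fun _ _ => S.exists_le_nhds_of_tendsto_branch⟩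
  exact .of_continuous_injective_isClosedMap S.continuous_branch S.branch_injective
    hproper.isClosedMap

end BranchingScheme

end Superperfect

section Fusion

theorem exists_forall_of_wellFounded {ι α : Type*} {r : ι → ι → Prop} (hwf : WellFounded r)
    {R : ∀ i, (∀ j, r j i → α) → α → Prop} (h : ∀ i u, ∃ a, R i u a) :
    ∃ u : ι → α, ∀ i, R i (fun j _ => u j) (u i) := by
  choose g hg using h
  refine ⟨hwf.fix g, fun i => ?_⟩
  rw [hwf.fix_eq]
  exact hg i _

theorem encode_lt_encode_cons {α : Type*} [Encodable α] (a : α) (σ : List α) :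
    encode σ < encode (a :: σ) := by
  rw [encode_list_cons]
  exact Nat.lt_succ_of_le (Nat.right_le_pair _ _)

theorem strictMono_encode_res {α : Type*} [Encodable α] (x : ℕ → α) :
    StrictMono fun n => encode (res x n) :=
  strictMono_nat_of_lt_succ fun n => encode_lt_encode_cons (x n) (res x n)

theorem exists_extension_forall_le {ι α : Type*} [Finite ι] [TopologicalSpace α]
    [DiscreteTopology α] [Nonempty α] {f : ι → (ℕ → α) → ℕ∞} (hf : ∀ i, IsGenericallyFinite (f i))
    (l : List α) : ∃ l', l <:+ l' ∧ ∃ N : ℕ, ∀ i, ∀ x ∈ cone l', f i x ≤ N := by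
  have := Fintype.ofFinite ι
  have hsup := isGenericallyFinite_finset_sup Finset.univ fun i _ => hf i
  obtain ⟨x, hxl, hx⟩ := hsup.dense_lt_top.inter_open_nonempty _ (isOpen_cone l) (cone_nonempty l)
  obtain ⟨N, hN⟩ := ENat.exists_nat_gt (ne_of_lt hx)
  obtain ⟨l', hl, hl'⟩ := exists_extension_cone_subset (hsup.upperSemicontinuous x N hN) hxl
  exact ⟨l', hl, N, fun i y hy =>
    (Finset.le_sup (f := f) (Finset.mem_univ i) y).trans (hl' hy).le⟩

/-- What the fusion constructs at each index: a node, its label, and a natural number bounding the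
functions `f v` over the cone of this node, for `v` ranging over the nodes constructed before. -/
structure FusionStage where
  node : List ℕ
  label : ℕ
  bound : ℕ

theorem exists_fusionStage {f : List ℕ → (ℕ → ℕ) → ℕ∞} (hf : ∀ s, IsGenericallyFinite (f s))
    (σ : List ℕ) (u : ∀ τ, encode τ < encode σ → FusionStage) :
    ∃ v : FusionStage, v.label ≤ v.bound ∧ ∀ τ hτ, (u τ hτ).bound < v.label ∧
      (τ = σ.tail → v.label :: (u τ hτ).node <:+ v.node) ∧
      ∀ x ∈ cone v.node, f (u τ hτ).node x ≤ v.bound := by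
  let ι := {τ : List ℕ // encode τ < encode σ}
  have : Finite ι := (finite_Iio (encode σ)).preimage encode_injective.injOn
  obtain ⟨a, ha⟩ := Finite.bddAbove_range fun τ : ι => (u τ τ.2).bound + 1
  obtain ⟨l, hl⟩ : ∃ l, ∀ τ hτ, τ = σ.tail → a :: (u τ hτ).node <:+ l := by
    by_cases h : encode σ.tail < encode σ
    · exact ⟨a :: (u _ h).node, by rintro _ _ rfl; exact List.suffix_rfl⟩
    · exact ⟨[], by rintro _ h' rfl; exact absurd h' h⟩
  obtain ⟨l', hll', N, hN⟩ := exists_extension_forall_le (fun τ : ι => hf (u τ τ.2).node) l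
  refine ⟨⟨l', a, max a N⟩, le_max_left a N, fun τ hτ => ⟨ha (mem_range_self (⟨τ, hτ⟩ : ι)),
    fun htail => (hl τ hτ htail).trans hll', fun x hx => (hN ⟨τ, hτ⟩ x hx).trans ?_⟩⟩
  exact_mod_cast le_max_right a N

theorem exists_branchingScheme_forall_le {f : List ℕ → (ℕ → ℕ) → ℕ∞}
    (hf : ∀ s, IsGenericallyFinite (f s)) :
    ∃ (S : BranchingScheme ℕ ℕ) (b : List ℕ → ℕ), ∀ σ τ, encode τ < encode σ →
      b τ < S.label σ ∧ ∀ x ∈ cone (S.node σ), f (S.node τ) x ≤ b σ := by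
  obtain ⟨u, hu⟩ :=
    exists_forall_of_wellFounded (measure (encode : List ℕ → ℕ)).wf (exists_fusionStage hf)
  have label_lt : ∀ σ τ, encode τ < encode σ → (u τ).label < (u σ).label := fun σ τ h =>
    (hu τ).1.trans_lt ((hu σ).2 τ h).1
  have label_injective : Function.Injective fun σ => (u σ).label := fun σ τ hστ => by
    by_contra hne
    rcases (encode_injective.ne hne).lt_or_gt with h | h
    exacts [(label_lt _ _ h).ne hστ, (label_lt _ _ h).ne' hστ]
  let S : BranchingScheme ℕ ℕ :=
    { node σ := (u σ).node
      label σ := (u σ).label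
      label_cons_node_suffix a σ := ((hu (a :: σ)).2 σ (encode_lt_encode_cons a σ)).2.1 rfl
      label_injective _ _ _ h := (List.cons.inj (label_injective h)).1 }
  exact ⟨S, fun σ => (u σ).bound, fun σ τ h => ⟨((hu σ).2 τ h).1, ((hu σ).2 τ h).2.2⟩⟩

theorem exists_encode_res_interleaved {α : Type*} [Encodable α] {x y : ℕ → α} (hxy : x ≠ y)
    (k : ℕ) : ∃ r ≥ k, ∃ n, encode (res y r) < encode (res x n) ∧
      encode (res x n) < encode (res y (r + 1)) := by
  obtain ⟨d, hd⟩ := Function.ne_iff.1 hxy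
  have hx := strictMono_encode_res x
  have hy := strictMono_encode_res y
  set n := max (d + 1) (encode (res y k) + 1)
  have hne : ∀ r, encode (res y r) ≠ encode (res x n) := by
    intro r hr
    have hres : res y r = res x n := encode_injective hr
    obtain rfl : r = n := by simpa using congrArg List.length hres
    exact hd (res_eq_res.1 hres (le_max_left (d + 1) _)).symm
  have hk : encode (res y k) < encode (res x n) := (le_max_right _ _).trans hx.le_apply
  have hex : ∃ r, encode (res x n) < encode (res y r) :=
    ⟨encode (res x n) + 1, Nat.lt_of_lt_of_le (Nat.lt_succ_self _) hy.le_apply⟩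
  classical
  have hfind : k < Nat.find hex := hy.lt_iff_lt.1 (hk.trans (Nat.find_spec hex))
  obtain ⟨r, hr⟩ : ∃ r, Nat.find hex = r + 1 := Nat.exists_eq_add_one.2 (pos_of_gt hfind)
  refine ⟨r, by lia, n, (hne r).lt_of_le ?_, hr ▸ Nat.find_spec hex⟩
  exact not_lt.1 (Nat.find_min hex (by lia))

theorem frequently_lt_branch_of_ne {f : List ℕ → (ℕ → ℕ) → ℕ∞} {S : BranchingScheme ℕ ℕ}
    {b : List ℕ → ℕ} (hS : ∀ σ τ, encode τ < encode σ →
      b τ < S.label σ ∧ ∀ x ∈ cone (S.node σ), f (S.node τ) x ≤ b σ)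
    {x y : ℕ → ℕ} (hxy : x ≠ y) :
    ∃ᶠ k in atTop, f (res (S.branch y) k) (S.branch x) < S.branch y k := by
  refine frequently_atTop.2 fun k => ?_
  obtain ⟨r, hr, n, hrn, hnr⟩ := exists_encode_res_interleaved hxy k
  refine ⟨(S.node (res y r)).length, hr.trans (S.le_length_node y r), ?_⟩
  rw [S.branch_apply_length, show res (S.branch y) _ = _ from S.branch_mem_cone y r]
  calc f (S.node (res y r)) (S.branch x) ≤ b (res x n) :=
        (hS _ _ hrn).2 _ (S.branch_mem_cone x n)
    _ < S.label (res y (r + 1)) := mod_cast (hS _ _ hnr).1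

theorem GenericallyBounded.exists_superperfect_free {H : Set ((ℕ → ℕ) × (ℕ → ℕ))}
    (h : GenericallyBounded H) : ∃ P : Set (ℕ → ℕ), IsClosed P ∧ Nonempty (P ≃ₜ (ℕ → ℕ)) ∧
      ∀ x ∈ P, ∀ y ∈ P, x ≠ y → (x, y) ∉ H := by
  obtain ⟨f, hf, hbound⟩ := h
  obtain ⟨S, b, hS⟩ := exists_branchingScheme_forall_le hf
  have hemb := S.isClosedEmbedding_branch
  refine ⟨range S.branch, hemb.isClosed_range, ⟨hemb.isEmbedding.toHomeomorph.symm⟩, ?_⟩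
  rintro _ ⟨x, rfl⟩ _ ⟨y, rfl⟩ hne hmem
  obtain ⟨k, hlt, hle⟩ := ((frequently_lt_branch_of_ne hS (ne_of_apply_ne _ hne)).and_eventually
    (hbound _ hmem)).exists
  exact hlt.not_ge hle

end Fusion

theorem stmt_13_general (E : Set ((ℕ → ℕ) × (ℕ → ℕ)))
    (hE : MeasureTheory.AnalyticSet E)
    (hsec : ∀ᶠ a in residual (ℕ → ℕ), ∃ K : ℕ → Set (ℕ → ℕ),
      (∀ n, IsCompact (K n)) ∧ {x : ℕ → ℕ | (a, x) ∈ E} ⊆ ⋃ n, K n) :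
    ∃ P : Set (ℕ → ℕ), IsClosed P ∧ Nonempty (P ≃ₜ (ℕ → ℕ)) ∧
      ∀ x ∈ P, ∀ y ∈ P, x ≠ y → (x, y) ∉ E := by
  refine (genericallyBounded_of_analyticSet hE ?_).exists_superperfect_free
  filter_upwards [hsec] with a ⟨K, hK, hsub⟩
  exact exists_eventually_le_of_subset_iUnion_isCompact hK hsub

theorem stmt_13 (E : Set ((ℕ → ℕ) × (ℕ → ℕ)))
    (hE : MeasureTheory.AnalyticSet E)
    (hsec : ∀ a : ℕ → ℕ, ∃ K : ℕ → Set (ℕ → ℕ),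
      (∀ n, IsCompact (K n)) ∧ {x : ℕ → ℕ | (a, x) ∈ E} ⊆ ⋃ n, K n) :
    ∃ P : Set (ℕ → ℕ), IsClosed P ∧ Nonempty (P ≃ₜ (ℕ → ℕ)) ∧
      ∀ x ∈ P, ∀ y ∈ P, x ≠ y → (x, y) ∉ E :=
  stmt_13_general E hE (Eventually.of_forall hsec)
end

section
/- (Zapletal's superperfect dichotomy) Let E be a Borel equivalence relation on ℕ^ℕ and A ⊆ ℕ^ℕ an analytic set. Then either A is covered by the union of countably many E-equivalence classes together with a set contained in countably many compact sets, or there is a superperfect set P ⊆ A whose distinct elements are pairwise E-inequivalent. -/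
/-!
Let `q = (q₁, q₂)` be a continuous surjection of Baire space onto the restriction of `E` to `A`. A
scheme for `q₂` inside a fibre of `q₁` parametrizes a superperfect set contained in one `E`-class.
The schemes of this kind form a closed set, on which Silver's dichotomy applies to the equivalence
relation induced by `E`.

* If there is a Cantor family of schemes in pairwise inequivalent classes, then choosing one branch
  in each of suitably many of them gives a superperfect set of pairwise inequivalent points.
* Otherwise, remove from `A` the countably many classes that contain schemes. All sections of `E` on
  the remaining set `B` are σ-bounded, since one that is not would contain a scheme.
  If `B` itself is not σ-bounded, then the sections are dominated, over a comeagre set of points of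
  a Polish space parametrizing a nowhere σ-bounded part of `B`, by a function that depends
  continuously on the point, and one builds a superperfect set whose elements are not dominated by
  the functions attached to the others.

Silver's dichotomy is proved by Miller's method: if `E` has uncountably many classes and analytic
complement, then the complement receives a continuous homomorphism from the graph `G₀` on Cantor
space. Since `G₀`-independent sets with the Baire property are meagre, the pullback of `E` is
meagre, and Mycielski's theorem gives a Cantor set of pairwise inequivalent points.
-/

open Set Filter Topology PiNat
open MeasureTheory hiding cylinder

namespace SuperperfectDichotomy

/-! ### Sequences and cylinders -/

section Cylinders

theorem eventually_eq_of_continuous {X Y : Type*} [TopologicalSpace X] [TopologicalSpace Y]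
    [DiscreteTopology Y] {f : X → Y} (hf : Continuous f) (x : X) : ∀ᶠ y in 𝓝 x, f y = f x := by
  have hx := hf.tendsto x
  rwa [nhds_discrete Y, tendsto_pure] at hx

variable {κ : Type*} {α β : ℕ → κ} {n : ℕ}

theorem mem_cylinder_iff_res_eq : β ∈ cylinder α n ↔ res β n = res α n := by
  rw [cylinder_eq_res, mem_ofPred_eq]

theorem mem_cylinder_succ : β ∈ cylinder α (n + 1) ↔ β ∈ cylinder α n ∧ β n = α n := by
  rw [mem_cylinder_iff_res_eq, mem_cylinder_iff_res_eq, res_succ, res_succ, List.cons.injEq,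
    and_comm]

variable [TopologicalSpace κ] [DiscreteTopology κ]

theorem hasBasis_nhds_cylinder (α : ℕ → κ) : (𝓝 α).HasBasis (fun _ => True) (cylinder α) := by
  refine ⟨fun U => ⟨fun hU => ?_, fun ⟨n, _, hn⟩ => mem_of_superset
    ((isOpen_cylinder _ α n).mem_nhds (self_mem_cylinder α n)) hn⟩⟩
  obtain ⟨_, ⟨β, n, rfl⟩, hα, hU⟩ :=
    (isTopologicalBasis_cylinders fun _ : ℕ => κ).mem_nhds_iff.1 hU
  exact ⟨n, trivial, by rwa [mem_cylinder_iff_eq.1 hα]⟩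

theorem eventually_res_eq (α : ℕ → κ) (n : ℕ) : ∀ᶠ β in 𝓝 α, res β n = res α n :=
  (hasBasis_nhds_cylinder α).eventually_iff.2 ⟨n, trivial, fun _ => mem_cylinder_iff_res_eq.1⟩

end Cylinders

section Branches

variable {κ ι : Type*} {b : List κ → ℕ → ι} {m : List κ → ℕ}

/-- The limit of the sequences attached by `b` to the initial segments of `α`. It is meant for
families satisfying `IsRefining`, for which entry `i` is settled at stage `i + 1`. -/
def branchLimit (b : List κ → ℕ → ι) (α : ℕ → κ) : ℕ → ι := fun i => b (res α (i + 1)) i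

/-- Each child of a node `s` keeps the first `m s` entries of `b s`, and `m` increases along
branches. As with `PiNat.res`, a list carries its latest entry at its head. -/
structure IsRefining (b : List κ → ℕ → ι) (m : List κ → ℕ) : Prop where
  mem : ∀ k s, b (k :: s) ∈ cylinder (b s) (m s)
  lt : ∀ k s, m s < m (k :: s)

theorem IsRefining.strictMono (h : IsRefining b m) (α : ℕ → κ) :
    StrictMono fun n => m (res α n) :=
  strictMono_nat_of_lt_succ fun _ => h.lt _ _

theorem IsRefining.res_mem_cylinder (h : IsRefining b m) (α : ℕ → κ) {n n' : ℕ} (hn : n ≤ n') :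
    b (res α n') ∈ cylinder (b (res α n)) (m (res α n)) := by
  induction n', hn using Nat.le_induction with
  | base => exact self_mem_cylinder _ _
  | succ n' hn ih =>
    rw [← mem_cylinder_iff_eq.1 ih]
    exact cylinder_anti _ ((h.strictMono α).monotone hn) (h.mem _ _)

theorem IsRefining.branchLimit_mem_cylinder (h : IsRefining b m) (α : ℕ → κ) (n : ℕ) :
    branchLimit b α ∈ cylinder (b (res α n)) (m (res α n)) := by
  refine mem_cylinder_iff.2 fun i hi => ?_
  rcases le_total n (i + 1) with hn | hn
  · exact mem_cylinder_iff.1 (h.res_mem_cylinder α hn) i hi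
  · exact (mem_cylinder_iff.1 (h.res_mem_cylinder α hn) i ((h.strictMono α).id_le (i + 1))).symm

theorem IsRefining.tendsto_branchLimit [TopologicalSpace ι] (h : IsRefining b m) (α : ℕ → κ) :
    Tendsto (fun n => b (res α n)) atTop (𝓝 (branchLimit b α)) := by
  refine tendsto_pi_nhds.2 fun i => tendsto_nhds_of_eventually_eq ?_
  filter_upwards [eventually_gt_atTop i] with n hn
  exact (mem_cylinder_iff.1 (h.branchLimit_mem_cylinder α n) i
    (hn.trans_le ((h.strictMono α).id_le n))).symm

theorem IsRefining.apply_branchLimit_eq {κ' ι' : Type*} [TopologicalSpace ι] [TopologicalSpace ι']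
    [T2Space ι'] {b' : List κ' → ℕ → ι'} {m' : List κ' → ℕ} (h : IsRefining b m)
    (h' : IsRefining b' m') {q : (ℕ → ι) → ℕ → ι'} (hq : Continuous q) {α : ℕ → κ} {β : ℕ → κ'}
    (k : ℕ) (hqb : ∀ n, q (b (res α n)) = b' (res β (n + k))) :
    q (branchLimit b α) = branchLimit b' β :=
  tendsto_nhds_unique ((hq.tendsto _).comp (h.tendsto_branchLimit α))
    (((h'.tendsto_branchLimit β).comp (tendsto_add_atTop_nat k)).congr fun n => (hqb n).symm)

theorem continuous_uncurry_branchLimit [TopologicalSpace κ] [DiscreteTopology κ]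
    [TopologicalSpace ι] :
    Continuous fun p : (List κ → ℕ → ι) × (ℕ → κ) => branchLimit p.1 p.2 := by
  refine continuous_pi fun i => continuous_iff_continuousAt.2 fun p => ?_
  have hfixed : Continuous fun q : (List κ → ℕ → ι) × (ℕ → κ) => q.1 (res p.2 (i + 1)) i := by
    fun_prop
  refine hfixed.continuousAt.congr ?_
  filter_upwards [continuous_snd.tendsto p (eventually_res_eq p.2 (i + 1))] with q hq
  simp only [branchLimit, show res q.2 (i + 1) = res p.2 (i + 1) from hq]

theorem continuous_branchLimit [TopologicalSpace κ] [DiscreteTopology κ] [TopologicalSpace ι]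
    (b : List κ → ℕ → ι) : Continuous (branchLimit b) :=
  continuous_uncurry_branchLimit.comp (Continuous.prodMk_right b)

end Branches

section Splitting

variable {κ ι δ : Type*} {p : (ℕ → κ) → ι → δ}

/-- For each finite sequence, some coordinate of `p α` determines the next entry of `α`, for all
branches `α` extending that sequence. A continuous map of this kind parametrizes a superperfect
set. -/
def IsSplitting (p : (ℕ → κ) → ι → δ) : Prop :=
  ∀ α n, ∃ l, ∀ β ∈ cylinder α n, ∀ γ ∈ cylinder α n, p β l = p γ l → β n = γ n

theorem IsSplitting.injective (hp : IsSplitting p) : Function.Injective p := by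
  intro β γ h
  have hmem : ∀ n, γ ∈ cylinder β n := by
    intro n
    induction n with
    | zero => simp only [cylinder_zero, mem_univ]
    | succ n ih =>
      obtain ⟨l, hl⟩ := hp β n
      exact mem_cylinder_succ.2 ⟨ih, hl γ ih β (self_mem_cylinder β n) (by rw [h])⟩
  exact funext fun n => ((mem_cylinder_succ.1 (hmem (n + 1))).2).symm

variable [TopologicalSpace κ] [TopologicalSpace δ] [DiscreteTopology δ]

theorem IsSplitting.isProperMap (hp : IsSplitting p) (hcont : Continuous p) : IsProperMap p := by
  refine isProperMap_iff_ultrafilter_of_t2.2 ⟨hcont, fun 𝒰 x hx => ?_⟩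
  have hcoord : ∀ l, ∀ᶠ β in 𝒰, p β l = x l := fun l =>
    hx.eventually (eventually_eq_of_continuous (continuous_apply l) x)
  have hcyl : ∀ n, ∃ α, cylinder α n ∈ 𝒰 := by
    intro n
    induction n with
    | zero =>
      obtain ⟨α, -⟩ := 𝒰.neBot.nonempty_of_mem univ_mem
      exact ⟨α, by rw [cylinder_zero]; exact univ_mem⟩
    | succ n ih =>
      obtain ⟨α, hα⟩ := ih
      obtain ⟨l, hl⟩ := hp α n
      have hinter := inter_mem hα (hcoord l)
      obtain ⟨β, hβ, hβl⟩ := 𝒰.neBot.nonempty_of_mem hinter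
      refine ⟨β, mem_of_superset hinter fun γ hγ => mem_cylinder_succ.2 ⟨?_, ?_⟩⟩
      · rw [mem_cylinder_iff_eq.1 hβ]; exact hγ.1
      · exact hl γ hγ.1 β hβ (hγ.2.trans hβl.symm)
  choose α hα using hcyl
  refine ⟨fun n => α (n + 1) n, tendsto_pi_nhds.2 fun n => ?_⟩
  refine tendsto_nhds_of_eventually_eq ?_
  filter_upwards [hα (n + 1)] with β hβ using (mem_cylinder_succ.1 hβ).2

theorem IsSplitting.isClosedEmbedding (hp : IsSplitting p) (hcont : Continuous p) :
    IsClosedEmbedding p :=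
  .of_continuous_injective_isClosedMap hcont hp.injective (hp.isProperMap hcont).isClosedMap

end Splitting

/-! ### σ-ideals and their kernels -/

section SigmaIdeal

/-- A σ-ideal of subsets of `X`, given as the predicate of being small. -/
structure IsSigmaIdeal {X : Type*} (p : Set X → Prop) : Prop where
  mono : ∀ ⦃s t : Set X⦄, s ⊆ t → p t → p s
  sUnion : ∀ ⦃S : Set (Set X)⦄, S.Countable → (∀ s ∈ S, p s) → p (⋃₀ S)

variable {X : Type*} {p : Set X → Prop}

theorem IsSigmaIdeal.empty (hp : IsSigmaIdeal p) : p ∅ := by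
  simpa only [sUnion_empty] using hp.sUnion countable_empty fun s hs => hs.elim

theorem IsSigmaIdeal.union (hp : IsSigmaIdeal p) {s t : Set X} (hs : p s) (ht : p t) :
    p (s ∪ t) := by
  rw [← sUnion_pair]
  exact hp.sUnion (Set.toFinite _).countable (by simp [hs, ht])

theorem IsSigmaIdeal.iUnion (hp : IsSigmaIdeal p) {ι : Sort*} [Countable ι] {s : ι → Set X}
    (h : ∀ i, p (s i)) : p (⋃ i, s i) := by
  rw [← sUnion_range]
  exact hp.sUnion (countable_range s) (forall_mem_range.2 h)

variable [TopologicalSpace X] {C : Set X}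

/-- The points near which `C` is nowhere small. -/
def kernel (p : Set X → Prop) (C : Set X) : Set X :=
  {x | ∀ U ∈ 𝓝 x, ¬ p (C ∩ U)}

theorem isClosed_kernel : IsClosed (kernel p C) := by
  refine isClosed_iff_frequently.2 fun x hx U hU hCU => ?_
  obtain ⟨y, hy, hyU⟩ := (hx.and_eventually (eventually_mem_nhds_iff.2 hU)).exists
  exact hy U hyU hCU

theorem IsSigmaIdeal.kernel_subset_closure (hp : IsSigmaIdeal p) : kernel p C ⊆ closure C := by
  refine fun x hx => mem_closure_iff_nhds.2 fun U hU => ?_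
  rw [inter_comm]
  exact nonempty_iff_ne_empty.2 fun hCU => hx U hU (hCU ▸ hp.empty)

theorem IsSigmaIdeal.of_locally [HereditarilyLindelofSpace X] (hp : IsSigmaIdeal p)
    (h : ∀ x ∈ C, ∃ U ∈ 𝓝 x, p (C ∩ U)) : p C := by
  refine (HereditarilyLindelofSpace.isLindelof C).induction_on (p := p)
    hp.mono (fun _ hS => hp.sUnion hS) fun x hx => ?_
  obtain ⟨U, hU, hCU⟩ := h x hx
  exact ⟨C ∩ U, inter_mem self_mem_nhdsWithin (mem_nhdsWithin_of_mem_nhds hU), hCU⟩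

theorem IsSigmaIdeal.diff_kernel [HereditarilyLindelofSpace X] (hp : IsSigmaIdeal p)
    (C : Set X) : p (C \ kernel p C) := by
  refine hp.of_locally fun x hx => ?_
  have hx' : ∃ U ∈ 𝓝 x, p (C ∩ U) := by
    by_contra! h
    exact hx.2 h
  exact hx'.imp fun U hU => ⟨hU.1, hp.mono (inter_subset_inter_left U sdiff_subset) hU.2⟩

end SigmaIdeal

/-! ### σ-bounded sets -/

/-- `B` is eventually dominated by a single function; equivalently, `B` is σ-bounded. -/
def IsSigmaBounded (B : Set (ℕ → ℕ)) : Prop :=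
  ∃ ψ : ℕ → ℕ, ∀ x ∈ B, x ≤ᶠ[atTop] ψ

section IsSigmaBounded

variable {B B' : Set (ℕ → ℕ)}

theorem IsSigmaBounded.mono (hB : IsSigmaBounded B) (h : B' ⊆ B) : IsSigmaBounded B' :=
  hB.imp fun _ hψ x hx => hψ x (h hx)

theorem exists_forall_eventuallyLE (ψ : ℕ → ℕ → ℕ) : ∃ φ : ℕ → ℕ, ∀ n, ψ n ≤ᶠ[atTop] φ := by
  refine ⟨fun i => (Finset.range (i + 1)).sup fun n => ψ n i, fun n => ?_⟩
  filter_upwards [eventually_ge_atTop n] with i hi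
  exact Finset.le_sup (f := fun n => ψ n i) (Finset.mem_range_succ_iff.2 hi)

theorem isSigmaIdeal_isSigmaBounded_image {X : Type*} (g : X → ℕ → ℕ) :
    IsSigmaIdeal fun D => IsSigmaBounded (g '' D) where
  mono _ _ hst ht := ht.mono (image_mono hst)
  sUnion S hS h := by
    rcases S.eq_empty_or_nonempty with rfl | hne
    · exact ⟨0, by simp⟩
    obtain ⟨f, rfl⟩ := hS.exists_eq_range hne
    choose ψ hψ using fun n => h (f n) (mem_range_self n)
    obtain ⟨φ, hφ⟩ := exists_forall_eventuallyLE ψ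
    refine ⟨φ, ?_⟩
    rintro _ ⟨x, ⟨_, ⟨n, rfl⟩, hx⟩, rfl⟩
    exact (hψ n _ (mem_image_of_mem g hx)).trans (hφ n)

theorem exists_forall_le_add_of_eventuallyLE {x ψ : ℕ → ℕ} (h : x ≤ᶠ[atTop] ψ) :
    ∃ c, ∀ i, x i ≤ ψ i + c := by
  obtain ⟨N, hN⟩ := eventually_atTop.1 h
  refine ⟨(Finset.range N).sup x, fun i => ?_⟩
  rcases le_or_gt N i with hi | hi
  · exact (hN i hi).trans (Nat.le_add_right _ _)
  · exact (Finset.le_sup (f := x) (Finset.mem_range.2 hi)).trans (Nat.le_add_left _ _)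

theorem IsSigmaBounded.exists_isCompact_cover (h : IsSigmaBounded B) :
    ∃ K : ℕ → Set (ℕ → ℕ), (∀ n, IsCompact (K n)) ∧ B ⊆ ⋃ n, K n := by
  obtain ⟨ψ, hψ⟩ := h
  refine ⟨fun c => Set.pi univ fun i => Iic (ψ i + c),
    fun c => isCompact_univ_pi fun i => (finite_Iic _).isCompact, fun x hx => ?_⟩
  obtain ⟨c, hc⟩ := exists_forall_le_add_of_eventuallyLE (hψ x hx)
  exact mem_iUnion.2 ⟨c, fun i _ => hc i⟩

theorem exists_unbounded_coordinate {X : Type*} {g : X → ℕ → ℕ} {C : Set X}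
    (h : ¬ IsSigmaBounded (g '' C)) (N : ℕ) : ∃ l ≥ N, ∀ M, ∃ c ∈ C, M < g c l := by
  contrapose! h
  choose! M hM using h
  refine ⟨M, forall_mem_image.2 fun c hc => ?_⟩
  filter_upwards [eventually_ge_atTop N] with l hl using hM l hl c hc

end IsSigmaBounded

section UnboundedKernel

variable {X : Type*} [TopologicalSpace X] {g : X → ℕ → ℕ} {C D : Set X}

/-- The points of `C` near which `g` is nowhere σ-bounded: what remains of `C` after removing the
relatively open subsets with σ-bounded image. -/
def unboundedKernel (g : X → ℕ → ℕ) (C : Set X) : Set X :=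
  C ∩ kernel (fun D => IsSigmaBounded (g '' D)) C

theorem unboundedKernel_subset : unboundedKernel g C ⊆ C := inter_subset_left

theorem isClosed_unboundedKernel (hC : IsClosed C) : IsClosed (unboundedKernel g C) :=
  hC.inter isClosed_kernel

variable [HereditarilyLindelofSpace X]

theorem not_isSigmaBounded_image_inter_unboundedKernel (hD : D ⊆ C)
    (h : ¬ IsSigmaBounded (g '' D)) : ¬ IsSigmaBounded (g '' (D ∩ unboundedKernel g C)) := by
  have hideal := isSigmaIdeal_isSigmaBounded_image g
  refine fun hcon => h (hideal.mono (fun x hx => ?_) (hideal.union hcon (hideal.diff_kernel C)))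
  exact (em (x ∈ kernel _ C)).imp (fun hxK => ⟨hx, hD hx, hxK⟩) fun hxK => ⟨hD hx, hxK⟩

theorem unboundedKernel_nonempty (h : ¬ IsSigmaBounded (g '' C)) :
    (unboundedKernel g C).Nonempty := by
  obtain ⟨l, -, hl⟩ := exists_unbounded_coordinate
    (not_isSigmaBounded_image_inter_unboundedKernel Subset.rfl h) 0
  obtain ⟨c, hc, -⟩ := hl 0
  exact ⟨c, hc.2⟩

theorem exists_unbounded_coordinate_nhds {x : X} (hx : x ∈ unboundedKernel g C) {U : Set X}
    (hU : U ∈ 𝓝 x) (N : ℕ) : ∃ l ≥ N, ∀ M, ∃ c ∈ unboundedKernel g C ∩ U, M < g c l := by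
  obtain ⟨l, hN, hl⟩ := exists_unbounded_coordinate
    (not_isSigmaBounded_image_inter_unboundedKernel inter_subset_left (hx.2 U hU)) N
  refine ⟨l, hN, fun M => ?_⟩
  obtain ⟨c, hc, hM⟩ := hl M
  exact ⟨c, ⟨hc.2, hc.1.2⟩, hM⟩

end UnboundedKernel

/-! ### Schemes of nodes -/

section Schemes

/-- An approximation to a point of `ℕ → ℕ` (the initial segment of length `depth` of `point`),
together with a coordinate at which its children are told apart. Using a product rather than a
structure makes the space of trees of nodes a Polish space. -/
abbrev Node : Type := (ℕ → ℕ) × ℕ × ℕ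

namespace Node

/-- A point in the box of the node. -/
abbrev point (d : Node) : ℕ → ℕ := d.1

/-- The length of the finite sequence represented by the node. -/
abbrev depth (d : Node) : ℕ := d.2.1

/-- The coordinate at which the children of the node take different values. -/
abbrev coord (d : Node) : ℕ := d.2.2

/-- The basic open set represented by the node. -/
abbrev box (d : Node) : Set (ℕ → ℕ) := cylinder d.point d.depth

end Node

variable {g φ : (ℕ → ℕ) → ℕ → ℕ} {T : List ℕ → Node} {C : Set (ℕ → ℕ)}

/-- A tree of nodes along which `g` splits: on the box of each child of a node `P`, the value of
`g` at the coordinate `P.coord` is constant, and different children have different values. -/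
structure IsScheme (g : (ℕ → ℕ) → ℕ → ℕ) (T : List ℕ → Node) : Prop where
  refining : IsRefining (fun s => (T s).point) fun s => (T s).depth
  const : ∀ k s, ∀ c ∈ (T (k :: s)).box, g c (T s).coord = g (T (k :: s)).point (T s).coord
  inj : ∀ s, Function.Injective fun k => g (T (k :: s)).point (T s).coord

/-- The point determined by a branch of a tree of nodes. -/
abbrev treeLimit (T : List ℕ → Node) : (ℕ → ℕ) → ℕ → ℕ := branchLimit fun s => (T s).point

theorem IsScheme.treeLimit_mem_box (h : IsScheme g T) (α : ℕ → ℕ) (n : ℕ) :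
    treeLimit T α ∈ (T (res α n)).box :=
  h.refining.branchLimit_mem_cylinder α n

theorem IsScheme.apply_treeLimit (h : IsScheme g T) (α : ℕ → ℕ) (n : ℕ) :
    g (treeLimit T α) (T (res α n)).coord =
      g (T (α n :: res α n)).point (T (res α n)).coord :=
  h.const (α n) (res α n) _ (h.treeLimit_mem_box α (n + 1))

theorem IsScheme.isSplitting (h : IsScheme g T) : IsSplitting fun α => g (treeLimit T α) := by
  have hvalue : ∀ α n, ∀ β ∈ cylinder α n, g (treeLimit T β) (T (res α n)).coord =
      g (T (β n :: res α n)).point (T (res α n)).coord := fun α n β hβ => by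
    rw [← mem_cylinder_iff_res_eq.1 hβ]
    exact h.apply_treeLimit β n
  exact fun α n => ⟨(T (res α n)).coord, fun β hβ γ hγ hβγ =>
    h.inj (res α n) ((hvalue α n β hβ).symm.trans (hβγ.trans (hvalue α n γ hγ)))⟩

theorem encode_lt_encode_cons (k : ℕ) (s : List ℕ) :
    Encodable.encode s < Encodable.encode (k :: s) :=
  Nat.lt_succ_of_le (Nat.right_le_pair _ _)

/-- The tree whose node at `k :: s` is chosen by `F` as a child of the node at `s`, in view of all
nodes already chosen, that is, those at lists with a smaller code. -/
noncomputable def greedyTree {D : Type*} (root : D) (F : Set D → D → D) : List ℕ → D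
  | [] => root
  | k :: s => F {d | ∃ u, ∃ _ : Encodable.encode u < Encodable.encode (k :: s),
      d = greedyTree root F u} (greedyTree root F s)
termination_by s => Encodable.encode s
decreasing_by
  · assumption
  · exact encode_lt_encode_cons k s

theorem exists_greedy_tree {D : Type*} {good : D → Prop} {child : Set D → D → D → Prop}
    (root : ∃ d, good d)
    (extend : ∀ H P, H.Finite → good P → ∃ d, good d ∧ child H P d) :
    ∃ T : List ℕ → D, (∀ s, good (T s)) ∧ ∀ k s,
      child (T '' {u | Encodable.encode u < Encodable.encode (k :: s)}) (T s) (T (k :: s)) := by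
  obtain ⟨r, hr⟩ := root
  have : Nonempty D := ⟨r⟩
  choose! F hgood hchild using extend
  have hcons : ∀ k s, greedyTree r F (k :: s) = F (greedyTree r F ''
      {u | Encodable.encode u < Encodable.encode (k :: s)}) (greedyTree r F s) := fun k s => by
    rw [greedyTree]
    congr 1
    ext d
    simp only [mem_ofPred_eq, mem_image, exists_prop, eq_comm]
  have hfin : ∀ s : List ℕ, (greedyTree r F ''
      {u | Encodable.encode u < Encodable.encode s}).Finite := fun s =>
    ((finite_Iio _).preimage Encodable.encode_injective.injOn).image _
  have hgoodT : ∀ s, good (greedyTree r F s) := by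
    intro s
    induction s with
    | nil => rwa [greedyTree]
    | cons k s ih => rw [hcons]; exact hgood _ _ (hfin _) ih
  exact ⟨greedyTree r F, hgoodT, fun k s => by
    rw [hcons k s]; exact hchild _ _ (hfin _) (hgoodT s)⟩

/-- The requirements on a child `d` of `P` when the nodes in `H` have been chosen before it: besides
those of a scheme for `g`, the value of `φ` at every earlier coordinate is frozen on the box of `d`,
and at the coordinate of `P` the new point exceeds all earlier values of `φ` and `g`. -/
structure IsChild (g φ : (ℕ → ℕ) → ℕ → ℕ) (H : Set Node) (P d : Node) : Prop where
  point_mem : d.point ∈ P.box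
  depth_lt : P.depth < d.depth
  coord_lt : P.coord < d.coord
  const : ∀ c ∈ d.box, g c P.coord = g d.point P.coord
  freeze : ∀ e ∈ H, ∀ c ∈ d.box, φ c e.coord = φ d.point e.coord
  lt_right : ∀ e ∈ H, φ e.point P.coord < g d.point P.coord
  lt_left : ∀ e ∈ H, g e.point P.coord < g d.point P.coord

/-- Infinitely many children can be chosen below `d` with points in `C`, and they can themselves
be extended. -/
structure IsExtendible (g : (ℕ → ℕ) → ℕ → ℕ) (C : Set (ℕ → ℕ)) (d : Node) : Prop where
  point_mem : d.point ∈ unboundedKernel g C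
  unbounded : ∀ M, ∃ c ∈ unboundedKernel g C ∩ d.box, M < g c d.coord

theorem exists_isExtendible {x : ℕ → ℕ} (hx : x ∈ unboundedKernel g C) {p : (ℕ → ℕ) → Prop}
    (hp : ∀ᶠ c in 𝓝 x, p c) (N : ℕ) :
    ∃ d : Node, IsExtendible g C d ∧ d.point = x ∧ N ≤ d.depth ∧ N ≤ d.coord ∧
      ∀ c ∈ d.box, p c := by
  obtain ⟨n, -, hn⟩ := (hasBasis_nhds_cylinder x).eventually_iff.1 hp
  obtain ⟨l, hl, hunb⟩ := exists_unbounded_coordinate_nhds hx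
    ((isOpen_cylinder _ x (max n N)).mem_nhds (self_mem_cylinder _ _)) N
  exact ⟨(x, max n N, l), ⟨hx, hunb⟩, rfl, le_max_right _ _, hl,
    fun c hc => hn (cylinder_anti x (le_max_left _ _) hc)⟩

theorem IsExtendible.exists_isChild (hg : Continuous g) (hφ : Continuous φ) {H : Set Node}
    (hH : H.Finite) {P : Node} (hP : IsExtendible g C P) :
    ∃ d, IsExtendible g C d ∧ IsChild g φ H P d := by
  obtain ⟨M₁, hM₁⟩ := (hH.image fun e => φ e.point P.coord).bddAbove
  obtain ⟨M₂, hM₂⟩ := (hH.image fun e => g e.point P.coord).bddAbove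
  obtain ⟨x, ⟨hx, hxP⟩, hxM⟩ := hP.unbounded (max M₁ M₂)
  have hconst : ∀ᶠ c in 𝓝 x, g c P.coord = g x P.coord :=
    eventually_eq_of_continuous ((continuous_apply _).comp hg) x
  have hfreeze : ∀ᶠ c in 𝓝 x, ∀ e ∈ H, φ c e.coord = φ x e.coord :=
    (eventually_all_finite hH).2 fun e _ =>
      eventually_eq_of_continuous ((continuous_apply _).comp hφ) x
  obtain ⟨d, hd, rfl, hdepth, hcoord, hbox⟩ :=
    exists_isExtendible hx (hconst.and hfreeze) (max P.depth P.coord + 1)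
  exact ⟨d, hd, hxP, by omega, by omega, fun c hc => (hbox c hc).1,
    fun e he c hc => (hbox c hc).2 e he,
    fun e he => ((hM₁ (mem_image_of_mem _ he)).trans (le_max_left _ _)).trans_lt hxM,
    fun e he => ((hM₂ (mem_image_of_mem _ he)).trans (le_max_right _ _)).trans_lt hxM⟩

/-- Every node of `T` meets the requirements `IsChild` with respect to its predecessors in the
enumeration of all finite sequences. -/
def IsGreedy (g φ : (ℕ → ℕ) → ℕ → ℕ) (T : List ℕ → Node) : Prop :=
  ∀ k s, IsChild g φ (T '' {u | Encodable.encode u < Encodable.encode (k :: s)}) (T s) (T (k :: s))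

theorem IsGreedy.isScheme (h : IsGreedy g φ T) : IsScheme g T where
  refining := ⟨fun k s => (h k s).point_mem, fun k s => (h k s).depth_lt⟩
  const k s := (h k s).const
  inj s := by
    have hlt : ∀ {k k'}, Encodable.encode (k :: s) < Encodable.encode (k' :: s) →
        g (T (k :: s)).point (T s).coord < g (T (k' :: s)).point (T s).coord := fun hk =>
      (h _ s).lt_left _ (mem_image_of_mem T hk)
    intro k k' hkk'
    rcases lt_trichotomy (Encodable.encode (k :: s)) (Encodable.encode (k' :: s)) with hk | hk | hk
    · exact absurd hkk' (hlt hk).ne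
    · exact (List.cons.inj (Encodable.encode_injective hk)).1
    · exact absurd hkk' (hlt hk).ne'

theorem exists_le_lt_succ {a : ℕ → ℕ} (ha : StrictMono a) {e N : ℕ} (he : a N ≤ e) :
    ∃ m ≥ N, a m ≤ e ∧ e < a (m + 1) := by
  by_contra! hcon
  have hle : ∀ m ≥ N, a m ≤ e := fun m hm => Nat.le_induction he hcon m hm
  have := (ha.id_le (max N (e + 1))).trans (hle _ (le_max_left _ _))
  exact absurd ((le_max_right N (e + 1)).trans this) (Nat.not_succ_le_self e)

theorem exists_encode_res_lt_lt {α β : ℕ → ℕ} (h : α ≠ β) (N : ℕ) :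
    ∃ k ≥ N, ∃ n, Encodable.encode (res α k) < Encodable.encode (res β (n + 1)) ∧
      Encodable.encode (res β (n + 1)) < Encodable.encode (res α (k + 1)) := by
  have hmono : ∀ γ : ℕ → ℕ, StrictMono fun n => Encodable.encode (res γ n) := fun γ =>
    strictMono_nat_of_lt_succ fun n => encode_lt_encode_cons _ _
  obtain ⟨i, hi⟩ := Function.ne_iff.1 h
  set n := max i (Encodable.encode (res α N))
  obtain ⟨k, hNk, hk, hk'⟩ := exists_le_lt_succ (hmono α) (N := N)
    (e := Encodable.encode (res β (n + 1)))
    (((le_max_right _ _).trans n.le_succ).trans ((hmono β).id_le (n + 1)))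
  refine ⟨k, hNk, n, hk.lt_of_ne fun heq => hi ?_, hk'⟩
  have hres := Encodable.encode_injective heq
  obtain rfl : k = n + 1 := by simpa only [res_length] using congrArg List.length hres
  exact res_eq_res.1 hres (Nat.lt_succ_of_le (le_max_left _ _))

theorem IsGreedy.frequently_lt (h : IsGreedy g φ T) {α β : ℕ → ℕ} (hαβ : α ≠ β) :
    ∃ᶠ i in atTop, φ (treeLimit T β) i < g (treeLimit T α) i := by
  have hcoord : StrictMono fun n => (T (res α n)).coord :=
    strictMono_nat_of_lt_succ fun n => (h (α n) (res α n)).coord_lt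
  refine hcoord.tendsto_atTop.frequently (frequently_atTop.2 fun N => ?_)
  obtain ⟨k, hNk, n, hkn, hnk⟩ := exists_encode_res_lt_lt hαβ N
  refine ⟨k, hNk, ?_⟩
  rw [h.isScheme.apply_treeLimit, (h (β n) (res β n)).freeze _ (mem_image_of_mem T hkn) _
    (h.isScheme.treeLimit_mem_box β (n + 1))]
  exact (h (α k) (res α k)).lt_right _ (mem_image_of_mem T hnk)

theorem exists_isScheme_frequently_lt (hg : Continuous g) (hφ : Continuous φ)
    (hC : ¬ IsSigmaBounded (g '' C)) :
    ∃ T, IsScheme g T ∧ (∀ s, (T s).point ∈ C) ∧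
      ∀ α β, α ≠ β → ∃ᶠ i in atTop, φ (treeLimit T β) i < g (treeLimit T α) i := by
  obtain ⟨x, hx⟩ := unboundedKernel_nonempty hC
  obtain ⟨r, hr, -⟩ := exists_isExtendible hx (p := fun _ => True) (.of_forall fun _ => trivial) 0
  obtain ⟨T, hT, hgreedy⟩ := exists_greedy_tree ⟨r, hr⟩ fun H P hH hP =>
    hP.exists_isChild hg hφ hH
  have hgreedy : IsGreedy g φ T := hgreedy
  exact ⟨T, hgreedy.isScheme, fun s => unboundedKernel_subset (hT s).point_mem,
    fun _ _ => hgreedy.frequently_lt⟩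

end Schemes

/-! ### Continuous selection of parameters -/

section Selection

theorem exists_strictMono_selection {v : ℕ → ℕ → ℕ} (hv : ∀ k, Function.Injective (v k)) :
    ∃ κ : ℕ → ℕ, StrictMono fun k => v k (κ k) := by
  obtain ⟨φ, hφ, hφv⟩ := extraction_forall_of_frequently (P := fun k x => x ∈ range (v k))
    fun k => Nat.frequently_atTop_iff_infinite.2 (infinite_range_of_injective (hv k))
  choose κ hκ using hφv
  exact ⟨κ, fun i j hij => by simpa only [hκ] using hφ hij⟩

/-- A finite stage of the simultaneous choice of a parameter in `ℕ → Bool` and a branch in `ℕ → ℕ`: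
the parameter is to agree with `param` up to `depth`, and the branch is to begin with `stem`. -/
structure Stage where
  /-- A parameter compatible with the stage. -/
  param : ℕ → Bool
  /-- The number of entries of the parameter that are decided. -/
  depth : ℕ
  /-- The entries of the branch that are decided, the latest one first. -/
  stem : List ℕ

namespace Stage

/-- The parameters compatible with a stage. -/
def params (d : Stage) : Set (ℕ → Bool) := cylinder d.param d.depth

/-- The latest entry of the branch. -/
def entry (d : Stage) : ℕ := d.stem.headI

/-- The stages `c k` extend `d` by one entry of the branch each, have disjoint sets of parameters,
and decide `l` at the new stem and `v` at the new entry, with different values of `v`. -/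
structure IsFan (l : (ℕ → Bool) → List ℕ → ℕ) (v : (ℕ → Bool) → List ℕ → ℕ → ℕ) (d : Stage)
    (c : ℕ → Stage) : Prop where
  mem : ∀ k, (c k).param ∈ d.params
  lt : ∀ k, d.depth < (c k).depth
  disjoint : Pairwise fun k j => Disjoint (c k).params (c j).params
  stem_eq : ∀ k, (c k).stem = (c k).entry :: d.stem
  label_eq : ∀ k, ∀ y ∈ (c k).params, l y (c k).stem = l (c k).param (c k).stem
  value_eq : ∀ k, ∀ y ∈ (c k).params, v y d.stem (c k).entry = v (c k).param d.stem (c k).entry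
  injective : Function.Injective fun k => v (c k).param d.stem (c k).entry

end Stage

theorem disjoint_cylinder_update_not {y : ℕ → Bool} {r k j n n' : ℕ} (hkj : k < j) (hk : r + k < n)
    (hj : r + j < n') : Disjoint (cylinder (Function.update y (r + k) (!y (r + k))) n)
      (cylinder (Function.update y (r + j) (!y (r + j))) n') := by
  refine disjoint_left.2 fun w hw hw' => ?_
  have hne := (mem_cylinder_iff.1 hw _ hk).symm.trans (mem_cylinder_iff.1 hw' _ (by omega))
  rw [Function.update_self, Function.update_of_ne (by omega)] at hne
  exact Bool.not_ne_self _ hne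

variable {l : (ℕ → Bool) → List ℕ → ℕ} {v : (ℕ → Bool) → List ℕ → ℕ → ℕ}

theorem Stage.exists_isFan (hl : ∀ s, Continuous fun y => l y s)
    (hv : ∀ s k, Continuous fun y => v y s k) (hinj : ∀ y s, Function.Injective (v y s))
    (d : Stage) : ∃ c, d.IsFan l v c := by
  obtain ⟨y, r, s⟩ := d
  set z : ℕ → ℕ → Bool := fun k => Function.update y (r + k) (!y (r + k))
  obtain ⟨κ, hκ⟩ := exists_strictMono_selection fun k => hinj (z k) s
  have hdecide : ∀ k, ∃ n, ∀ w ∈ cylinder (z k) n,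
      l w (κ k :: s) = l (z k) (κ k :: s) ∧ v w s (κ k) = v (z k) s (κ k) := fun k => by
    simpa only [true_and] using (hasBasis_nhds_cylinder (z k)).eventually_iff.1
      ((eventually_eq_of_continuous (hl (κ k :: s)) (z k)).and
        (eventually_eq_of_continuous (hv s (κ k)) (z k)))
  choose n hn using hdecide
  have hdisj : ∀ {k j}, k < j → Disjoint (cylinder (z k) (max (n k) (r + k + 1)))
      (cylinder (z j) (max (n j) (r + j + 1))) := fun hkj =>
    disjoint_cylinder_update_not hkj (by omega) (by omega)
  refine ⟨fun k => ⟨z k, max (n k) (r + k + 1), κ k :: s⟩, fun k => ?_, fun k => by dsimp; omega,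
    fun k j hkj => ?_, fun k => rfl,
    fun k w hw => (hn k w (cylinder_anti _ (le_max_left _ _) hw)).1,
    fun k w hw => (hn k w (cylinder_anti _ (le_max_left _ _) hw)).2, hκ.injective⟩
  · exact cylinder_anti y (Nat.le_add_right r k) (update_mem_cylinder y (r + k) _)
  · exact hkj.lt_or_gt.elim hdisj fun hjk => (hdisj hjk).symm

theorem exists_stage_tree (hl : ∀ s, Continuous fun y => l y s)
    (hv : ∀ s k, Continuous fun y => v y s k) (hinj : ∀ y s, Function.Injective (v y s)) :
    ∃ N : List ℕ → Stage, (N []).stem = [] ∧ (∀ y ∈ (N []).params, l y [] = l (N []).param []) ∧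
      ∀ s, (N s).IsFan l v fun k => N (k :: s) := by
  choose c hc using Stage.exists_isFan hl hv hinj
  obtain ⟨n, -, hn⟩ := (hasBasis_nhds_cylinder fun _ => false).eventually_iff.1
    (eventually_eq_of_continuous (hl []) _)
  exact ⟨fun s => List.rec ⟨fun _ => false, n, []⟩ (fun k _ d => c d k) s, rfl, fun y hy => hn hy,
    fun s => hc _⟩

theorem injective_branchLimit_of_disjoint {κ ι : Type*} {b : List κ → ℕ → ι} {m : List κ → ℕ}
    (h : IsRefining b m)
    (hdisj : ∀ s, Pairwise fun k j =>
      Disjoint (cylinder (b (k :: s)) (m (k :: s))) (cylinder (b (j :: s)) (m (j :: s)))) :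
    Function.Injective (branchLimit b) := by
  intro α β hαβ
  have hres : ∀ n, res α n = res β n := by
    intro n
    induction n with
    | zero => rfl
    | succ n ih =>
      have hα := h.branchLimit_mem_cylinder α (n + 1)
      have hβ := h.branchLimit_mem_cylinder β (n + 1)
      rw [res_succ] at hα
      rw [← hαβ, res_succ, ← ih] at hβ
      rw [res_succ, res_succ, ih, (hdisj (res α n)).eq (not_disjoint_iff.2 ⟨_, hα, hβ⟩)]
  exact res_injective (funext hres)

/-- The entries of `α` choose among disjoint cylinders of parameters. Each `v y s` has infinitely
many values, so its values on these cylinders can be made distinct. -/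
theorem exists_continuous_selection (hl : ∀ s, Continuous fun y => l y s)
    (hv : ∀ s k, Continuous fun y => v y s k) (hinj : ∀ y s, Function.Injective (v y s)) :
    ∃ (Y : (ℕ → ℕ) → ℕ → Bool) (a : (ℕ → ℕ) → ℕ → ℕ) (L : List ℕ → ℕ) (V : List ℕ → ℕ → ℕ),
      Continuous Y ∧ Function.Injective Y ∧ Continuous a ∧ (∀ s, Function.Injective (V s)) ∧
      ∀ α n, l (Y α) (res (a α) n) = L (res α n) ∧
        v (Y α) (res (a α) n) (a α n) = V (res α n) (α n) := by
  obtain ⟨N, hroot, hrootl, hN⟩ := exists_stage_tree hl hv hinj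
  have href : IsRefining (fun s => (N s).param) fun s => (N s).depth :=
    ⟨fun k s => (hN s).mem k, fun k s => (hN s).lt k⟩
  set a : (ℕ → ℕ) → ℕ → ℕ := branchLimit fun s _ => (N s).entry
  have hlabel : ∀ s, ∀ y ∈ (N s).params, l y (N s).stem = l (N s).param (N s).stem := by
    rintro (_ | ⟨k, s⟩)
    · rwa [hroot]
    · exact (hN s).label_eq k
  have hstem : ∀ α n, res (a α) n = (N (res α n)).stem := by
    intro α n
    induction n with
    | zero => exact hroot.symm
    | succ n ih => rw [res_succ, ih]; exact ((hN (res α n)).stem_eq (α n)).symm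
  refine ⟨branchLimit fun s => (N s).param, a, fun s => l (N s).param (N s).stem,
    fun s k => v (N (k :: s)).param (N s).stem (N (k :: s)).entry, continuous_branchLimit _,
    injective_branchLimit_of_disjoint href fun s => (hN s).disjoint, continuous_branchLimit _,
    fun s => (hN s).injective, fun α n => ?_⟩
  rw [hstem]
  exact ⟨hlabel _ _ (href.branchLimit_mem_cylinder α n),
    (hN (res α n)).value_eq (α n) _ (href.branchLimit_mem_cylinder α (n + 1))⟩

end Selection

/-! ### Meagre sets and the Baire property -/

section BaireProperty

variable {X : Type*} [TopologicalSpace X] {s t : Set X}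

theorem exists_isOpen_isMeagre_diff (hs : BaireMeasurableSet s) :
    ∃ O, IsOpen O ∧ IsMeagre (s \ O) ∧ IsMeagre (O \ s) := by
  obtain ⟨O, hO, h⟩ := hs.residualEq_isOpen
  refine ⟨O, hO, ?_, ?_⟩
  · filter_upwards [h.mem_iff] with x hx using fun hxs => hxs.2 (hx.1 hxs.1)
  · filter_upwards [h.mem_iff] with x hx using fun hxO => hxO.2 (hx.2 hxO.1)

theorem baireMeasurableSet_of_isMeagre_diff (ht : BaireMeasurableSet t)
    (hst : IsMeagre (s \ t)) (hts : IsMeagre (t \ s)) : BaireMeasurableSet s := by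
  refine ht.congr (eventuallyEq_set.2 ?_)
  filter_upwards [hst, hts] with x hxs hxt
  exact ⟨fun h => by_contra fun hx => hxt ⟨h, hx⟩, fun h => by_contra fun hx => hxs ⟨h, hx⟩⟩

theorem isSigmaIdeal_isMeagre : IsSigmaIdeal (IsMeagre : Set X → Prop) where
  mono _ _ hst ht := ht.mono hst
  sUnion S hS h := by
    rw [IsMeagre, compl_sUnion]
    exact (countable_sInter_mem (hS.image _)).2 (forall_mem_image.2 h)

theorem exists_residual_continuousOn {Y ι κ : Type*} [TopologicalSpace Y] [Countable ι]
    [Countable κ] [TopologicalSpace κ] [DiscreteTopology κ] {φ : Y → ι → κ}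
    (h : ∀ i j, BaireMeasurableSet {y | φ y i = j}) : ∃ G ∈ residual Y, ContinuousOn φ G := by
  choose O hO hdiff using fun i j => (h i j).residualEq_isOpen
  refine ⟨{y | ∀ i j, φ y i = j ↔ y ∈ O i j}, ?_, ?_⟩
  · exact eventually_countable_forall.2 fun i => eventually_countable_forall.2 fun j =>
      (hdiff i j).mem_iff
  · refine continuousOn_pi.2 fun i y hy => tendsto_nhds_of_eventually_eq ?_
    have hmem : O i (φ y i) ∈ 𝓝 y := (hO i _).mem_nhds ((hy i _).1 rfl)
    filter_upwards [self_mem_nhdsWithin, mem_nhdsWithin_of_mem_nhds hmem] with z hz hzO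
    exact (hz i _).2 hzO

end BaireProperty

theorem isMeagre_kernel_diff {X ι : Type*} [TopologicalSpace X] [HereditarilyLindelofSpace X]
    [Countable ι] {B : Set X} {C : ι → Set X} (h : B ⊆ ⋃ k, C k) :
    IsMeagre (kernel IsMeagre B \ ⋃ k, kernel IsMeagre (C k)) := by
  set Q := kernel IsMeagre B \ ⋃ k, kernel IsMeagre (C k)
  have hQ_baire : BaireMeasurableSet Q := by
    borelize X
    exact (isClosed_kernel.measurableSet.diff
      (.iUnion fun k => isClosed_kernel.measurableSet)).baireMeasurableSet
  obtain ⟨O, hO, hQO, hOQ⟩ := exists_isOpen_isMeagre_diff hQ_baire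
  have hBO : IsMeagre (B ∩ O) := by
    refine (hOQ.union (isMeagre_iUnion fun k =>
      isSigmaIdeal_isMeagre.diff_kernel (C k))).mono ?_
    rintro x ⟨hxB, hxO⟩
    obtain ⟨k, hk⟩ := mem_iUnion.1 (h hxB)
    by_cases hx : x ∈ kernel IsMeagre (C k)
    · exact Or.inl ⟨hxO, fun hxQ => hxQ.2 (mem_iUnion.2 ⟨k, hx⟩)⟩
    · exact Or.inr (mem_iUnion.2 ⟨k, hk, hx⟩)
  refine hQO.mono ?_
  rintro x ⟨hx, hxC⟩
  exact ⟨⟨hx, hxC⟩, fun hxO => hx O (hO.mem_nhds hxO) hBO⟩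

section AnalyticSets

variable {X : Type*} [TopologicalSpace X]

theorem analyticSet_inter [T2Space X] {s t : Set X} (hs : AnalyticSet s) (ht : AnalyticSet t) :
    AnalyticSet (s ∩ t) := by
  rw [inter_eq_iInter]
  exact .iInter (Bool.rec ht hs)

theorem exists_forall_res_of_forall_cons {P : List ℕ → Prop} (hnil : P [])
    (hcons : ∀ s, P s → ∃ k, P (k :: s)) : ∃ α : ℕ → ℕ, ∀ n, P (res α n) := by
  choose! k hk using hcons
  let branch : ℕ → List ℕ := Nat.rec [] fun _ s => k s :: s
  have hres : ∀ n, res (fun i => k (branch i)) n = branch n := by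
    intro n
    induction n with
    | zero => rfl
    | succ n ih => rw [res_succ, ih]
  refine ⟨fun i => k (branch i), fun n => ?_⟩
  rw [hres]
  induction n with
  | zero => exact hnil
  | succ n ih => exact hk _ ih

theorem eq_of_forall_mem_closure_image_cylinder {κ : Type*} [TopologicalSpace κ]
    [DiscreteTopology κ] [T2Space X] {q : (ℕ → κ) → X} (hq : Continuous q) {α : ℕ → κ} {x : X}
    (h : ∀ n, x ∈ closure (q '' cylinder α n)) : q α = x := by
  have hx : ClusterPt x (map q (𝓝 α)) :=
    ((hasBasis_nhds_cylinder α).map q).clusterPt_iff_forall_mem_closure.2 fun n _ => h n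
  have : (𝓝 x ⊓ 𝓝 (q α)).NeBot := hx.mono hq.continuousAt
  exact (eq_of_nhds_neBot this).symm

theorem baireMeasurableSet_of_analyticSet [T2Space X] [HereditarilyLindelofSpace X] {s : Set X}
    (hs : AnalyticSet s) : BaireMeasurableSet s := by
  rw [AnalyticSet] at hs
  obtain rfl | ⟨q, hq, rfl⟩ := hs
  · exact IsMeagre.empty.baireMeasurableSet
  let B : List ℕ → Set X := fun s => q '' {α | res α s.length = s}
  have hB : ∀ s, B s ⊆ ⋃ k, B (k :: s) := by
    rintro s _ ⟨α, hα : res α s.length = s, rfl⟩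
    exact mem_iUnion.2 ⟨α s.length, α, by simp [hα], rfl⟩
  have hB_nil : B [] = range q := by simp [B]
  have hker_baire : BaireMeasurableSet (kernel IsMeagre (range q)) :=
    isClosed_kernel.isOpen_compl.baireMeasurableSet.of_compl
  refine baireMeasurableSet_of_isMeagre_diff hker_baire (isSigmaIdeal_isMeagre.diff_kernel _)
    ((isMeagre_iUnion fun s => isMeagre_kernel_diff (hB s)).mono ?_)
  rintro x ⟨hx, hxq⟩
  by_contra hcon
  have hcons : ∀ s, x ∈ kernel IsMeagre (B s) → ∃ k, x ∈ kernel IsMeagre (B (k :: s)) :=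
    fun s hs => by_contra fun hk => hcon (mem_iUnion.2 ⟨s, hs, mt mem_iUnion.1 hk⟩)
  obtain ⟨α, hα⟩ := exists_forall_res_of_forall_cons
    (P := fun s => x ∈ kernel IsMeagre (B s)) (hB_nil ▸ hx) hcons
  refine hxq ⟨α, eq_of_forall_mem_closure_image_cylinder hq fun n => ?_⟩
  rw [cylinder_eq_res]
  simpa only [B, res_length] using isSigmaIdeal_isMeagre.kernel_subset_closure (hα n)

end AnalyticSets

theorem not_isSigmaBounded_image_of_residual {X : Type*} [TopologicalSpace X] [BaireSpace X]
    [Nonempty X] {h : X → ℕ → ℕ} (hcont : Continuous h)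
    (hunbdd : ∀ U : Set X, IsOpen U → U.Nonempty → ∃ i, ∀ M, ∃ y ∈ U, M < h y i)
    {G : Set X} (hG : G ∈ residual X) : ¬ IsSigmaBounded (h '' G) := by
  rintro ⟨ψ, hψ⟩
  have hnowhere : ∀ c : ℕ, IsNowhereDense {y | ∀ i, h y i ≤ ψ i + c} := by
    intro c
    have hclosed : IsClosed {y | ∀ i, h y i ≤ ψ i + c} := by
      simp only [ofPred_forall]
      exact isClosed_iInter fun i => isClosed_le (by fun_prop) continuous_const
    refine hclosed.isNowhereDense_iff.2 (not_nonempty_iff_eq_empty.1 fun hne => ?_)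
    obtain ⟨i, hi⟩ := hunbdd _ isOpen_interior hne
    obtain ⟨y, hy, hlt⟩ := hi (ψ i + c)
    exact hlt.not_ge (interior_subset hy i)
  refine not_isMeagre_of_mem_residual hG
    ((isMeagre_iUnion fun c => (hnowhere c).isMeagre).mono fun y hy => ?_)
  exact mem_iUnion.2 (exists_forall_le_add_of_eventuallyLE (hψ _ (mem_image_of_mem h hy)))

/-! ### Domination over a comeagre set of parameters -/

section GenericDomination

variable {X F : Type*} [TopologicalSpace F] {q₁ : X → F} {q₂ : X → ℕ → ℕ} {Z : Set X}

/-- Over a comeagre set of `y`, the part of `Z` in the fibre of `q₁` above `y` is eventually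
dominated, through `q₂`, by a function that depends continuously on `y`. -/
def IsGenericallyDominated (q₁ : X → F) (q₂ : X → ℕ → ℕ) (Z : Set X) : Prop :=
  ∃ φ : F → ℕ → ℕ, ∃ G ∈ residual F, ContinuousOn φ G ∧
    ∀ b ∈ Z, q₁ b ∈ G → q₂ b ≤ᶠ[atTop] φ (q₁ b)

theorem isSigmaIdeal_isGenericallyDominated : IsSigmaIdeal (IsGenericallyDominated q₁ q₂) where
  mono _ _ hst := fun ⟨φ, G, hG, hφ, h⟩ => ⟨φ, G, hG, hφ, fun b hb => h b (hst hb)⟩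
  sUnion S hS h := by
    rcases S.eq_empty_or_nonempty with rfl | hne
    · exact ⟨0, univ, univ_mem, continuousOn_const, by simp⟩
    obtain ⟨Z, rfl⟩ := hS.exists_eq_range hne
    choose φ G hG hφ hdom using fun n => h (Z n) (mem_range_self n)
    refine ⟨fun y i => (Finset.range (i + 1)).sup fun n => φ n y i, ⋂ n, G n,
      countable_iInter_mem.2 hG, continuousOn_pi.2 fun i => ?_, ?_⟩
    · exact ContinuousOn.finset_sup_apply fun n _ =>
        (continuous_apply i).comp_continuousOn ((hφ n).mono (iInter_subset _ _))
    · rintro b ⟨_, ⟨n, rfl⟩, hb⟩ hbG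
      filter_upwards [hdom n b hb (mem_iInter.1 hbG n), eventually_ge_atTop n] with i hi hni
      exact hi.trans (Finset.le_sup (f := fun n => φ n (q₁ b) i) (Finset.mem_range_succ_iff.2 hni))

/-- The points above which `Z` has a nonempty fibre on which every coordinate of `q₂` is
bounded. -/
def boundedFibres (q₁ : X → F) (q₂ : X → ℕ → ℕ) (Z : Set X) : Set F :=
  {y ∈ q₁ '' Z | ∀ i, ∃ j, y ∉ q₁ '' (Z ∩ {b | j ≤ q₂ b i})}

theorem isGenericallyDominated_of_eventually_bounded
    (hZ : ∀ i j, BaireMeasurableSet (q₁ '' (Z ∩ {b | j ≤ q₂ b i})))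
    (hbdd : ∀ᶠ y in residual F, ∀ i, ∃ j, y ∉ q₁ '' (Z ∩ {b | j ≤ q₂ b i})) :
    IsGenericallyDominated q₁ q₂ Z := by
  set P : ℕ → ℕ → Set F := fun i j => q₁ '' (Z ∩ {b | j ≤ q₂ b i})
  let φ : F → ℕ → ℕ := fun y i => sInf {j | y ∉ P i j}
  have hφ_baire : ∀ i j, BaireMeasurableSet {y | φ y i = j} := by
    intro i j
    have hleast : BaireMeasurableSet ((P i j)ᶜ ∩ ⋂ k < j, P i k) :=
      (hZ i j).compl.inter (.biInter (to_countable _) fun k _ => hZ i k)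
    refine hleast.congr (eventuallyEq_set.2 ?_)
    filter_upwards [hbdd] with y hy
    have hne : {j | y ∉ P i j}.Nonempty := hy i
    simp only [mem_inter_iff, mem_compl_iff, mem_iInter]
    refine ⟨fun ⟨hj, hlt⟩ => IsLeast.csInf_eq ⟨hj, fun k hk => ?_⟩, ?_⟩
    · exact le_of_not_gt fun hkj => hk (hlt k hkj)
    · rintro rfl
      exact ⟨Nat.sInf_mem hne, fun k hk => not_not.1 (Nat.notMem_of_lt_sInf hk)⟩
  obtain ⟨G, hG, hφ⟩ := exists_residual_continuousOn hφ_baire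
  refine ⟨φ, _, inter_mem hG hbdd, hφ.mono inter_subset_left, fun b hb hbG =>
    Eventually.of_forall fun i => ?_⟩
  have hφ_notMem : q₁ b ∉ P i (φ (q₁ b) i) := Nat.sInf_mem (hbG.2 i)
  exact le_of_not_ge fun h => hφ_notMem ⟨b, ⟨hb, h⟩, rfl⟩

variable [TopologicalSpace X] [PolishSpace X] [T2Space F]

theorem not_isSigmaBounded_fibre (hq₁ : Continuous q₁) (hq₂ : Continuous q₂) (hZ : IsClosed Z)
    {y : F} (hy : (Z ∩ q₁ ⁻¹' {y}).Nonempty)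
    (h : ∀ V ∈ TopologicalSpace.countableBasis X, y ∉ boundedFibres q₁ q₂ (Z ∩ V)) :
    ¬ IsSigmaBounded (q₂ '' (Z ∩ q₁ ⁻¹' {y})) := by
  have hclosed : IsClosed (Z ∩ q₁ ⁻¹' {y}) := hZ.inter (isClosed_singleton.preimage hq₁)
  have := hclosed.polishSpace
  let _ := TopologicalSpace.upgradeIsCompletelyMetrizable (Z ∩ q₁ ⁻¹' {y} : Set X)
  have := hy.to_subtype
  have hunbdd : ∀ U : Set ↥(Z ∩ q₁ ⁻¹' {y}), IsOpen U → U.Nonempty →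
      ∃ i, ∀ M, ∃ b ∈ U, M < q₂ b i := by
    rintro _ hrel ⟨⟨b, hbZ, hby⟩, hbU⟩
    obtain ⟨U, hU, rfl⟩ := isOpen_induced_iff.1 hrel
    obtain ⟨V, hV, hbV, hVU⟩ :=
      (TopologicalSpace.isBasis_countableBasis X).exists_subset_of_mem_open hbU hU
    have hcoord : ∃ i, ∀ j, y ∈ q₁ '' (Z ∩ V ∩ {b | j ≤ q₂ b i}) := by
      by_contra! hcon
      exact h V hV ⟨⟨b, ⟨hbZ, hbV⟩, hby⟩, hcon⟩
    obtain ⟨i, hi⟩ := hcoord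
    refine ⟨i, fun M => ?_⟩
    obtain ⟨c, ⟨⟨hcZ, hcV⟩, hM⟩, hcy⟩ := hi (M + 1)
    exact ⟨⟨c, hcZ, hcy⟩, hVU hcV, hM⟩
  have himage := not_isSigmaBounded_image_of_residual (hq₂.comp continuous_subtype_val) hunbdd
    univ_mem
  rwa [image_comp, image_univ, Subtype.range_coe] at himage

variable [SecondCountableTopology F]

theorem baireMeasurableSet_image_inter_le (hq₁ : Continuous q₁) (hq₂ : Continuous q₂)
    (hZ : AnalyticSet Z) (i j : ℕ) : BaireMeasurableSet (q₁ '' (Z ∩ {b | j ≤ q₂ b i})) := by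
  have hle : IsClosed {b | j ≤ q₂ b i} := isClosed_le continuous_const (by fun_prop)
  exact baireMeasurableSet_of_analyticSet
    ((analyticSet_inter hZ hle.analyticSet).image_of_continuous hq₁)

theorem exists_isOpen_isGenericallyDominated (hq₁ : Continuous q₁) (hq₂ : Continuous q₂)
    (hZ : AnalyticSet Z) (h : ¬ IsMeagre (boundedFibres q₁ q₂ Z)) :
    ∃ O, IsOpen O ∧ (Z ∩ q₁ ⁻¹' O).Nonempty ∧ IsGenericallyDominated q₁ q₂ (Z ∩ q₁ ⁻¹' O) := by
  have hbaire : BaireMeasurableSet (boundedFibres q₁ q₂ Z) := by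
    have heq : boundedFibres q₁ q₂ Z =
        q₁ '' Z ∩ ⋂ i, ⋃ j, (q₁ '' (Z ∩ {b | j ≤ q₂ b i}))ᶜ := by
      ext y
      simp only [boundedFibres, mem_ofPred_eq, mem_inter_iff, mem_iInter, mem_iUnion,
        mem_compl_iff]
    rw [heq]
    exact (baireMeasurableSet_of_analyticSet (hZ.image_of_continuous hq₁)).inter (.iInter fun i =>
      .iUnion fun j => (baireMeasurableSet_image_inter_le hq₁ hq₂ hZ i j).compl)
  obtain ⟨O, hO, hYO, hOY⟩ := exists_isOpen_isMeagre_diff hbaire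
  have hmeets : (boundedFibres q₁ q₂ Z ∩ O).Nonempty := by
    refine by_contra fun hemp => h (hYO.mono fun y hy => ?_)
    exact ⟨hy, fun hyO => hemp ⟨y, hy, hyO⟩⟩
  obtain ⟨_, ⟨⟨b, hb, rfl⟩, -⟩, hbO⟩ := hmeets
  have hZO : AnalyticSet (Z ∩ q₁ ⁻¹' O) := by
    borelize X
    exact analyticSet_inter hZ (hO.preimage hq₁).measurableSet.analyticSet
  refine ⟨O, hO, ⟨b, hb, hbO⟩, isGenericallyDominated_of_eventually_bounded
    (baireMeasurableSet_image_inter_le hq₁ hq₂ hZO) ?_⟩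
  filter_upwards [hOY] with y hy i
  by_cases hyO : y ∈ O
  · obtain ⟨j, hj⟩ := (by_contra fun hcon => hy ⟨hyO, hcon⟩ : y ∈ boundedFibres q₁ q₂ Z).2 i
    exact ⟨j, fun hmem => hj (image_mono (inter_subset_inter_left _ inter_subset_left) hmem)⟩
  · refine ⟨0, ?_⟩
    rintro ⟨c, ⟨⟨-, hcO⟩, -⟩, rfl⟩
    exact hyO hcO

theorem isGenericallyDominated_univ (hq₁ : Continuous q₁) (hq₂ : Continuous q₂)
    (hfib : ∀ y, IsSigmaBounded (q₂ '' (q₁ ⁻¹' {y}))) : IsGenericallyDominated q₁ q₂ univ := by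
  have hideal := isSigmaIdeal_isGenericallyDominated (q₁ := q₁) (q₂ := q₂)
  set K := kernel (IsGenericallyDominated q₁ q₂) univ
  have hK : IsClosed K := isClosed_kernel
  have hKc : IsGenericallyDominated q₁ q₂ (univ \ K) := hideal.diff_kernel univ
  have hmeagre : ∀ V ∈ TopologicalSpace.countableBasis X,
      IsMeagre (boundedFibres q₁ q₂ (K ∩ V)) := by
    intro V hV
    have hV := TopologicalSpace.isOpen_of_mem_countableBasis hV
    have hKV : AnalyticSet (K ∩ V) := by
      borelize X
      exact (hK.measurableSet.inter hV.measurableSet).analyticSet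
    by_contra hcon
    obtain ⟨O, hO, ⟨b, ⟨hbK, hbV⟩, hbO⟩, hdom⟩ :=
      exists_isOpen_isGenericallyDominated hq₁ hq₂ hKV hcon
    refine hbK _ (inter_mem (hV.mem_nhds hbV) ((hO.preimage hq₁).mem_nhds hbO))
      (hideal.mono ?_ (hideal.union hdom hKc))
    rintro c ⟨-, hcV, hcO⟩
    exact (em (c ∈ K)).imp (fun hcK => ⟨⟨hcK, hcV⟩, hcO⟩) fun hcK => ⟨trivial, hcK⟩
  have hresidual : {y | ∀ V ∈ TopologicalSpace.countableBasis X,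
      y ∉ boundedFibres q₁ q₂ (K ∩ V)} ∈ residual F :=
    (eventually_countable_ball (TopologicalSpace.countable_countableBasis X)).2 hmeagre
  have hKdom : IsGenericallyDominated q₁ q₂ K :=
    ⟨0, _, hresidual, continuousOn_const, fun b hbK hb =>
      (not_isSigmaBounded_fibre hq₁ hq₂ hK ⟨b, hbK, rfl⟩ hb
        ((hfib (q₁ b)).mono (image_mono inter_subset_right))).elim⟩
  exact hideal.mono (fun b _ => (em (b ∈ K)).imp id fun hb => ⟨trivial, hb⟩)
    (hideal.union hKdom hKc)

theorem exists_residual_forall_section_eventuallyLE {S : Set (F × (ℕ → ℕ))} (hS : AnalyticSet S)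
    (hsec : ∀ y, IsSigmaBounded {z | (y, z) ∈ S}) :
    ∃ φ : F → ℕ → ℕ, ∃ G ∈ residual F, ContinuousOn φ G ∧
      ∀ y ∈ G, ∀ z, (y, z) ∈ S → z ≤ᶠ[atTop] φ y := by
  rw [AnalyticSet] at hS
  obtain rfl | ⟨q, hq, rfl⟩ := hS
  · exact ⟨0, univ, univ_mem, continuousOn_const, by simp⟩
  have hfib : ∀ y, IsSigmaBounded ((fun b => (q b).2) '' ((fun b => (q b).1) ⁻¹' {y})) := by
    refine fun y => (hsec y).mono ?_
    rintro _ ⟨b, rfl, rfl⟩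
    exact mem_range_self b
  obtain ⟨φ, G, hG, hφ, hdom⟩ := isGenericallyDominated_univ (by fun_prop) (by fun_prop) hfib
  refine ⟨φ, G, hG, hφ, ?_⟩
  rintro y hy z ⟨b, hb⟩
  simpa only [hb] using hdom b trivial (by simpa only [hb] using hy)

end GenericDomination

/-! ### Meagre sets in products -/

section KuratowskiUlam

variable {X Y : Type*} [TopologicalSpace X] [TopologicalSpace Y] [SecondCountableTopology Y]
  {R : Set (X × Y)}

theorem eventually_residual_section_of_isOpen (hR : IsOpen R) (hdense : Dense R) :
    ∀ᶠ x in residual X, {y | (x, y) ∈ R} ∈ residual Y := by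
  have hmeets : ∀ V ∈ TopologicalSpace.countableBasis Y,
      ∀ᶠ x in residual X, ∃ y ∈ V, (x, y) ∈ R := by
    intro V hV
    have hV_open := TopologicalSpace.isOpen_of_mem_countableBasis hV
    have hproj : {x | ∃ y ∈ V, (x, y) ∈ R} = Prod.fst '' (R ∩ univ ×ˢ V) := by
      ext x
      simp [and_comm]
    refine residual_of_dense_open ?_ (dense_iff_inter_open.2 fun U hU hU_ne => ?_)
    · rw [hproj]
      exact isOpenMap_fst _ (hR.inter (isOpen_univ.prod hV_open))
    · obtain ⟨⟨x, y⟩, ⟨hx, hy⟩, hxy⟩ := dense_iff_inter_open.1 hdense (U ×ˢ V)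
        (hU.prod hV_open) (hU_ne.prod (TopologicalSpace.nonempty_of_mem_countableBasis hV))
      exact ⟨x, hx, y, hy, hxy⟩
  filter_upwards
    [(eventually_countable_ball (TopologicalSpace.countable_countableBasis Y)).2 hmeets] with x hx
  exact residual_of_dense_open (hR.preimage (Continuous.prodMk_right x))
    ((TopologicalSpace.isBasis_countableBasis Y).dense_iff.2 fun V hV _ => hx V hV)

theorem eventually_residual_section (hR : R ∈ residual (X × Y)) :
    ∀ᶠ x in residual X, {y | (x, y) ∈ R} ∈ residual Y := by
  obtain ⟨S, hS_open, hS_dense, hS, hSR⟩ := mem_residual_iff.1 hR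
  have hsec : ∀ᶠ x in residual X, ∀ D ∈ S, {y | (x, y) ∈ D} ∈ residual Y :=
    (eventually_countable_ball hS).2 fun D hD =>
      eventually_residual_section_of_isOpen (hS_open D hD) (hS_dense D hD)
  filter_upwards [hsec] with x hx
  have hx' : ∀ᶠ y in residual Y, ∀ D ∈ S, (x, y) ∈ D := (eventually_countable_ball hS).2 hx
  filter_upwards [hx'] with y hy using hSR (mem_sInter.2 hy)

theorem isMeagre_of_isMeagre_section [BaireSpace X] [BaireSpace Y] (hR : BaireMeasurableSet R)
    (h : ∀ x, IsMeagre {y | (x, y) ∈ R}) : IsMeagre R := by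
  obtain ⟨O, hO, hRO, hOR⟩ := exists_isOpen_isMeagre_diff hR
  have hsec : ∀ᶠ x in residual X, ∀ y, (x, y) ∉ O := by
    filter_upwards [eventually_residual_section hOR] with x hx y hy
    refine not_isMeagre_of_isOpen (hO.preimage (Continuous.prodMk_right x)) ⟨y, hy⟩ ?_
    have hx' : IsMeagre {y | (x, y) ∈ O \ R} := hx
    exact (hx'.union (h x)).mono fun z hz => (em ((x, z) ∈ R)).symm.imp (⟨hz, ·⟩) id
  have hempty : O = ∅ := by
    refine eq_empty_of_forall_notMem fun ⟨x, y⟩ hxy => ?_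
    obtain ⟨x', hx', hO'⟩ := (dense_of_mem_residual hsec).inter_open_nonempty _
      (hO.preimage (Continuous.prodMk_left y)) ⟨x, hxy⟩
    exact hO' y hx'
  rwa [hempty, sdiff_empty] at hRO

end KuratowskiUlam

section Mycielski

theorem exists_seq_of_forall_exists {δ : Type*} {P : ℕ → δ → Prop} {Q : ℕ → δ → δ → Prop}
    (hzero : ∃ d, P 0 d) (hsucc : ∀ n d, P n d → ∃ d', P (n + 1) d' ∧ Q n d d') :
    ∃ u : ℕ → δ, ∀ n, P n (u n) ∧ Q n (u n) (u (n + 1)) := by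
  obtain ⟨d, hd⟩ := hzero
  have : Nonempty δ := ⟨d⟩
  choose! next hP hQ using hsucc
  let u : ℕ → δ := Nat.rec d next
  have hu : ∀ n, P n (u n) := Nat.rec hd fun n ih => hP n _ ih
  exact ⟨u, fun n => ⟨hu n, hQ n _ (hu n)⟩⟩

variable {ι K : Type*}

theorem isOpenMap_eval_pair [TopologicalSpace K] {s t : ι} (hst : s ≠ t) :
    IsOpenMap fun z : ι → K => (z s, z t) := by
  classical
  exact (IsOpenMap.id.prodMap (isOpenMap_eval (⟨t, hst.symm⟩ : {j // j ≠ s}))).comp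
    (Homeomorph.funSplitAt K s).isOpenMap

theorem eventually_residual_pairwise_mem [TopologicalSpace K] [Countable ι] {R : Set (K × K)}
    (hR : R ∈ residual (K × K)) :
    ∀ᶠ z : ι → K in residual (ι → K), Pairwise fun s t => (z s, z t) ∈ R := by
  refine eventually_countable_forall.2 fun s => eventually_countable_forall.2 fun t => ?_
  by_cases hst : s = t
  · exact Eventually.of_forall fun z h => absurd hst h
  · have hpair := tendsto_residual_of_isOpenMap
      ((continuous_apply s).prodMk (continuous_apply t)) (isOpenMap_eval_pair (K := K) hst)
    filter_upwards [hpair hR] with z hz _ using hz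

theorem eventually_cylinder_prod_subset [TopologicalSpace K] [DiscreteTopology K]
    {x y : ℕ → K} {U : Set ((ℕ → K) × (ℕ → K))} (hU : U ∈ 𝓝 (x, y)) :
    ∀ᶠ n in atTop, cylinder x n ×ˢ cylinder y n ⊆ U := by
  rw [nhds_prod_eq, ((hasBasis_nhds_cylinder x).prod_same_index_anti (hasBasis_nhds_cylinder y)
    (fun _ _ _ _ h => cylinder_anti x h) fun _ _ _ _ h => cylinder_anti y h).mem_iff] at hU
  obtain ⟨n, -, hn⟩ := hU
  filter_upwards [eventually_ge_atTop n] with k hk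
  exact (prod_mono (cylinder_anti x hk) (cylinder_anti y hk)).trans hn

/-- The cylinders given by the first `m` entries of the sequences `z s`, for `s` of length `n`, are
pairwise related by `U`. -/
def IsPairwiseRelated (U : Set ((ℕ → Bool) × (ℕ → Bool))) (n : ℕ) (z : List Bool → ℕ → Bool)
    (m : ℕ) : Prop :=
  {s : List Bool | s.length = n}.Pairwise fun s t => cylinder (z s) m ×ˢ cylinder (z t) m ⊆ U

theorem eventually_isPairwiseRelated {U : Set ((ℕ → Bool) × (ℕ → Bool))} (hU : IsOpen U)
    {z : List Bool → ℕ → Bool} (hz : Pairwise fun s t => (z s, z t) ∈ U) (n : ℕ) :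
    ∀ᶠ m in atTop, IsPairwiseRelated U n z m := by
  have hfin := List.finite_length_eq Bool n
  refine (eventually_all_finite hfin).2 fun s _ => (eventually_all_finite hfin).2 fun t _ => ?_
  by_cases hst : s = t
  · exact Eventually.of_forall fun m h => absurd hst h
  · exact (eventually_cylinder_prod_subset (hU.mem_nhds (hz hst))).mono fun m hm _ => hm

theorem exists_isRefining_isPairwiseRelated {U : ℕ → Set ((ℕ → Bool) × (ℕ → Bool))}
    (hU : ∀ n, IsOpen (U n)) (hU_res : ∀ n, U n ∈ residual _) :
    ∃ N : ℕ → (List Bool → ℕ → Bool) × ℕ,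
      IsRefining (fun s => (N s.length).1 s) (fun s => (N s.length).2) ∧
      ∀ n, IsPairwiseRelated (U n) n (N n).1 (N n).2 := by
  set G : Set (List Bool → ℕ → Bool) := {z | ∀ n, Pairwise fun s t => (z s, z t) ∈ U n}
  have hG : G ∈ residual _ :=
    eventually_countable_forall.2 fun n => eventually_residual_pairwise_mem (hU_res n)
  have hrelated : ∀ z ∈ G, ∀ n, ∀ᶠ m in atTop, IsPairwiseRelated (U n) n z m :=
    fun z hz n => eventually_isPairwiseRelated (hU n) (hz n) n
  obtain ⟨N, hN⟩ := exists_seq_of_forall_exists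
    (P := fun n (d : (List Bool → ℕ → Bool) × ℕ) => d.1 ∈ G ∧ IsPairwiseRelated (U n) n d.1 d.2)
    (Q := fun n d d' => d.2 < d'.2 ∧ ∀ i s, s.length = n → d'.1 (i :: s) ∈ cylinder (d.1 s) d.2)
    (by
      obtain ⟨z, hz⟩ := (dense_of_mem_residual hG).nonempty
      obtain ⟨m, hm⟩ := (hrelated z hz 0).exists
      exact ⟨(z, m), hz, hm⟩)
    (by
      rintro n ⟨z, m⟩ ⟨-, -⟩
      obtain ⟨z', hz', hz'G⟩ := (dense_of_mem_residual hG).inter_open_nonempty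
        ({s : List Bool | s.length = n + 1}.pi fun s => cylinder (z s.tail) m)
        (isOpen_set_pi (List.finite_length_eq Bool (n + 1)) fun s _ => isOpen_cylinder _ _ _)
        ⟨fun s => z s.tail, fun s _ => self_mem_cylinder _ _⟩
      obtain ⟨m', hm', hlt⟩ := ((hrelated z' hz'G (n + 1)).and (eventually_gt_atTop m)).exists
      exact ⟨(z', m'), ⟨hz'G, hm'⟩, hlt, fun i s hs => hz' (i :: s) (by simp [hs])⟩)
  exact ⟨N, ⟨fun i s => (hN s.length).2.2 i s rfl, fun _ s => (hN s.length).2.1⟩,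
    fun n => (hN n).1.2⟩

theorem exists_continuous_pairwise_mem {R : Set ((ℕ → Bool) × (ℕ → Bool))}
    (hR : R ∈ residual ((ℕ → Bool) × (ℕ → Bool))) :
    ∃ c : (ℕ → Bool) → ℕ → Bool, Continuous c ∧ Pairwise fun α β => (c α, c β) ∈ R := by
  obtain ⟨Q, hQR, hQ, hQ_dense⟩ := mem_residual.1 hR
  obtain ⟨D, hD, rfl⟩ := isGδ_iff_eq_iInter_nat.1 hQ
  have hD_res : ∀ n, D n ∈ residual _ := fun n =>
    mem_of_superset (residual_of_dense_Gδ hQ hQ_dense) (iInter_subset D n)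
  obtain ⟨N, href, hN⟩ := exists_isRefining_isPairwiseRelated
    (U := fun n => ⋂ k ∈ Iic n, D k)
    (fun n => (finite_Iic n).isOpen_biInter fun k _ => hD k)
    (fun n => (countable_bInter_mem (finite_Iic n).countable).2 fun k _ => hD_res k)
  refine ⟨branchLimit fun s => (N s.length).1 s, continuous_branchLimit _,
    fun α β hαβ => hQR (mem_iInter.2 fun k => ?_)⟩
  obtain ⟨d, hd⟩ := Function.ne_iff.1 hαβ
  obtain ⟨n, hdn, hkn⟩ : ∃ n, d < n ∧ k ≤ n := ⟨max (d + 1) k, by omega, by omega⟩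
  have hne : res α n ≠ res β n := fun h => hd (res_eq_res.1 h hdn)
  have hα := href.branchLimit_mem_cylinder α n
  have hβ := href.branchLimit_mem_cylinder β n
  simp only [res_length] at hα hβ
  exact mem_iInter₂.1 (hN n (res_length α n) (res_length β n) hne ⟨hα, hβ⟩) k hkn

end Mycielski

/-! ### Silver's dichotomy -/

section Classes

variable {X : Type*} {E : X → X → Prop}

/-- Countably many classes of `E` cover `B`. -/
def MeetsCountablyManyClasses (E : X → X → Prop) (B : Set X) : Prop :=
  ∃ D : Set X, D.Countable ∧ ∀ x ∈ B, ∃ d ∈ D, E d x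

theorem isSigmaIdeal_meetsCountablyManyClasses (E : X → X → Prop) :
    IsSigmaIdeal (MeetsCountablyManyClasses E) where
  mono _ _ hst ht := ht.imp fun _ hD => ⟨hD.1, fun x hx => hD.2 x (hst hx)⟩
  sUnion S hS h := by
    choose! D hD hDE using h
    refine ⟨⋃ B ∈ S, D B, hS.biUnion hD, ?_⟩
    rintro x ⟨B, hB, hx⟩
    obtain ⟨d, hd, hdx⟩ := hDE B hB x hx
    exact ⟨d, mem_biUnion hB hd, hdx⟩

theorem exists_not_of_not_meetsCountablyManyClasses {B : Set X}
    (h : ¬ MeetsCountablyManyClasses E B) : ∃ x ∈ B, ∃ y ∈ B, ¬ E x y := by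
  contrapose! h
  rcases B.eq_empty_or_nonempty with rfl | ⟨x, hx⟩
  · exact (isSigmaIdeal_meetsCountablyManyClasses E).empty
  · exact ⟨{x}, countable_singleton x, fun y hy => ⟨x, mem_singleton x, h x hx y hy⟩⟩

end Classes

theorem IsSigmaIdeal.exists_nonempty_forall_eq_empty {X ι : Type*} [Countable ι]
    {p : Set X → Prop} (hp : IsSigmaIdeal p) (huniv : ¬ p univ) {A : ι → Set X → Set X}
    (hA : ∀ i, Monotone (A i)) (hA_sub : ∀ i Y, A i Y ⊆ Y) :
    ∃ Y : Set X, Y.Nonempty ∧ ∀ i, p (A i Y) → A i Y = ∅ := by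
  have hmin : ∀ i, ∃ Y, p Yᶜ ∧ ∀ Z, p Zᶜ → p (A i Z) → p (A i Y) := by
    intro i
    by_cases h : ∃ Y, p Yᶜ ∧ p (A i Y)
    · obtain ⟨Y, hY, hYA⟩ := h
      exact ⟨Y, hY, fun _ _ _ => hYA⟩
    · exact ⟨univ, by rw [compl_univ]; exact hp.empty, fun Z hZ hZA => absurd ⟨Z, hZ, hZA⟩ h⟩
  choose Y hY hY_min using hmin
  set Y' := ⋂ i, Y i
  set small := ⋃ i : {i // p (A i Y')}, A i Y'
  have hp_compl : p (Y' \ small)ᶜ := by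
    rw [sdiff_eq, compl_inter, compl_compl, compl_iInter]
    exact hp.union (hp.iUnion hY) (hp.iUnion fun i => i.2)
  refine ⟨Y' \ small, nonempty_iff_ne_empty.2 fun hempty => huniv ?_, fun i hi => ?_⟩
  · rwa [hempty, compl_empty] at hp_compl
  · have hi' : p (A i Y') :=
      hp.mono (hA i (iInter_subset Y i)) (hY_min i _ hp_compl hi)
    refine eq_empty_of_forall_notMem fun x hx => (hA_sub i _ hx).2 ?_
    exact mem_iUnion.2 ⟨⟨i, hi'⟩, hA i sdiff_subset hx⟩

theorem res_add {κ : Type*} (β : ℕ → κ) (j k : ℕ) :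
    res β (j + k) = res (fun i => β (i + k)) j ++ res β k := by
  induction j with
  | zero => simp
  | succ j ih => rw [Nat.add_right_comm, res_succ, ih, res_succ, List.cons_append]

theorem exists_res_eq {κ : Type*} [Nonempty κ] (s : List κ) :
    ∃ β : ℕ → κ, res β s.length = s := by
  induction s with
  | nil => exact ⟨fun _ => Classical.arbitrary κ, rfl⟩
  | cons i s ih =>
    obtain ⟨β, hβ⟩ := ih
    refine ⟨Function.update β s.length i, ?_⟩
    rw [List.length_cons, res_succ, Function.update_self,
      mem_cylinder_iff_res_eq.1 (update_mem_cylinder β _ i), hβ]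

section Homomorphism

variable {W X : Type*} {D : ℕ → List Bool} {u v : W → X} {Y Z : Set X}

/-- The homomorphisms from the `n`-th finite approximation of the graph `G₀` determined by `D` to
the graph parametrized by `u` and `v`, with all vertices in `Y`. Vertices are the lists `s` of
length `n`, sent to `z.1 s`. The edge joining `t ++ false :: D k` and `t ++ true :: D k` is sent to
the edge with parameter `z.2 t`. -/
def configurations (D : ℕ → List Bool) (u v : W → X) (Y : Set X) (n : ℕ) :
    Set ((List Bool → X) × (List Bool → W)) :=
  {z | (∀ s, s.length = n → z.1 s ∈ Y) ∧ ∀ t k, t.length + (k + 1) = n →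
    u (z.2 t) = z.1 (t ++ false :: D k) ∧ v (z.2 t) = z.1 (t ++ true :: D k)}

theorem configurations_mono (h : Y ⊆ Z) (n : ℕ) :
    configurations D u v Y n ⊆ configurations D u v Z n :=
  fun _ hz => ⟨fun s hs => h (hz.1 s hs), hz.2⟩

/-- The head of a list tells from which of the two configurations its vertex or edge is taken, and
the edge at `[]` is the new one, which joins the two. -/
theorem glue_mem_configurations {n : ℕ} {z : Bool → (List Bool → X) × (List Bool → W)}
    (hz : ∀ i, z i ∈ configurations D u v Y n) {w : W} (hu : u w = (z false).1 (D n))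
    (hv : v w = (z true).1 (D n)) (x : X) :
    ((fun s => s.rec x fun i s _ => (z i).1 s, fun s => s.rec w fun i s _ => (z i).2 s) :
      (List Bool → X) × (List Bool → W)) ∈ configurations D u v Y (n + 1) := by
  constructor
  · rintro (_ | ⟨i, s⟩) hs
    · simp at hs
    · exact (hz i).1 s (by simpa using hs)
  · rintro (_ | ⟨i, t⟩) k hk
    · obtain rfl : k = n := by simpa using hk
      exact ⟨hu, hv⟩
    · exact (hz i).2 t k (by simp only [List.length_cons] at hk; omega)

variable {E : X → X → Prop}

theorem exists_nonempty_forall_not_of_isOpen [TopologicalSpace W] [TopologicalSpace X]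
    [SecondCountableTopology W] [SecondCountableTopology X] (hD : ∀ n, (D n).length = n)
    (hE : ¬ MeetsCountablyManyClasses E univ) :
    ∃ Y : Set X, Y.Nonempty ∧ ∀ n, ∀ O, IsOpen O → (configurations D u v Y n ∩ O).Nonempty →
      ∃ z ∈ configurations D u v Y n ∩ O, ∃ z' ∈ configurations D u v Y n ∩ O,
        ¬ E (z.1 (D n)) (z'.1 (D n)) := by
  set 𝓑 := TopologicalSpace.countableBasis ((List Bool → X) × (List Bool → W))
  have : Countable 𝓑 := (TopologicalSpace.countable_countableBasis _).to_subtype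
  obtain ⟨Y, hY, hYE⟩ :=
    (isSigmaIdeal_meetsCountablyManyClasses E).exists_nonempty_forall_eq_empty hE
      (A := fun (i : ℕ × 𝓑) Y => (fun z => z.1 (D i.1)) '' (configurations D u v Y i.1 ∩ i.2))
      (fun i _ _ h => image_mono (inter_subset_inter_left _ (configurations_mono h i.1)))
      fun i Y => by rintro _ ⟨z, hz, rfl⟩; exact hz.1.1 _ (hD i.1)
  refine ⟨Y, hY, fun n O hO ⟨z, hz, hzO⟩ => ?_⟩
  obtain ⟨B, hB, hzB, hBO⟩ :=
    (TopologicalSpace.isBasis_countableBasis _).exists_subset_of_mem_open hzO hO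
  have hlarge := mt (hYE (n, ⟨B, hB⟩))
    (Nonempty.image _ (nonempty_of_mem (mem_inter hz hzB))).ne_empty
  obtain ⟨_, ⟨z₀, hz₀, rfl⟩, _, ⟨z₁, hz₁, rfl⟩, hne⟩ :=
    exists_not_of_not_meetsCountablyManyClasses hlarge
  exact ⟨z₀, ⟨hz₀.1, hBO hz₀.2⟩, z₁, ⟨hz₁.1, hBO hz₁.2⟩, hne⟩

end Homomorphism

section Limit

variable {D : ℕ → List Bool} {u v : (ℕ → ℕ) → ℕ → ℕ} {E : (ℕ → ℕ) → (ℕ → ℕ) → Prop}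

theorem exists_seq_configurations (hD : ∀ n, (D n).length = n)
    (huv : ∀ x y, ¬ E x y → ∃ w, u w = x ∧ v w = y) (hE : ¬ MeetsCountablyManyClasses E univ) :
    ∃ N : ℕ → (List Bool → ℕ → ℕ) × (List Bool → ℕ → ℕ), ∀ n,
      N n ∈ configurations D u v univ n ∧ ∀ i s, s.length ≤ n →
        (N (n + 1)).1 (i :: s) ∈ cylinder ((N n).1 s) n ∧
        (N (n + 1)).2 (i :: s) ∈ cylinder ((N n).2 s) n := by
  obtain ⟨Y, ⟨y, hy⟩, hY⟩ := exists_nonempty_forall_not_of_isOpen (u := u) (v := v) hD hE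
  have hsucc : ∀ n, ∀ z ∈ configurations D u v Y n, ∃ z' ∈ configurations D u v Y (n + 1),
      ∀ i s, s.length ≤ n → z'.1 (i :: s) ∈ cylinder (z.1 s) n ∧
        z'.2 (i :: s) ∈ cylinder (z.2 s) n := by
    intro n z hz
    have hfin := List.finite_length_le Bool n
    obtain ⟨z₀, ⟨hz₀, hz₀O⟩, z₁, ⟨hz₁, hz₁O⟩, hne⟩ := hY n
      (({s | s.length ≤ n}.pi fun s => cylinder (z.1 s) n) ×ˢ
        ({s | s.length ≤ n}.pi fun s => cylinder (z.2 s) n))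
      ((isOpen_set_pi hfin fun s _ => isOpen_cylinder _ _ _).prod
        (isOpen_set_pi hfin fun s _ => isOpen_cylinder _ _ _))
      ⟨z, hz, fun s _ => self_mem_cylinder _ _, fun s _ => self_mem_cylinder _ _⟩
    obtain ⟨w, hw₀, hw₁⟩ := huv _ _ hne
    refine ⟨_, glue_mem_configurations (z := fun i => bif i then z₁ else z₀)
      (by rintro (_ | _) <;> assumption) hw₀ hw₁ y, ?_⟩
    rintro (_ | _) s hs
    · exact ⟨hz₀O.1 s hs, hz₀O.2 s hs⟩
    · exact ⟨hz₁O.1 s hs, hz₁O.2 s hs⟩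
  have hzero : (fun _ => y, fun _ => y) ∈ configurations D u v Y 0 :=
    ⟨fun s _ => hy, fun t k hk => by omega⟩
  obtain ⟨N, hN⟩ := exists_seq_of_forall_exists ⟨_, hzero⟩ hsucc
  exact ⟨N, fun n => ⟨configurations_mono (subset_univ Y) n (hN n).1, (hN n).2⟩⟩

theorem exists_continuous_homomorphism (hD : ∀ n, (D n).length = n) (hu : Continuous u)
    (hv : Continuous v) (huv : ∀ x y, ¬ E x y ↔ ∃ w, u w = x ∧ v w = y)
    (hE : ¬ MeetsCountablyManyClasses E univ) :
    ∃ h : (ℕ → Bool) → ℕ → ℕ, Continuous h ∧ ∀ k β, res β k = D k → β k = false →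
      ¬ E (h β) (h (Function.update β k true)) := by
  obtain ⟨N, hN⟩ := exists_seq_configurations hD (fun x y => (huv x y).1) hE
  set vertex : List Bool → ℕ → ℕ := fun s => (N s.length).1 s
  have hvertex : IsRefining vertex List.length :=
    ⟨fun i s => ((hN s.length).2 i s le_rfl).1, fun _ _ => Nat.lt_succ_self _⟩
  refine ⟨branchLimit vertex, continuous_branchLimit _, fun k β hβ hfalse => ?_⟩
  set δ : ℕ → Bool := fun i => β (i + (k + 1))
  set β' := Function.update β k true
  have hres : ∀ j, res β (j + (k + 1)) = res δ j ++ false :: D k := fun j => by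
    rw [res_add, res_succ, hβ, hfalse]
  have hres' : ∀ j, res β' (j + (k + 1)) = res δ j ++ true :: D k := fun j => by
    have hβ' : res β' k = D k := (mem_cylinder_iff_res_eq.1 (update_mem_cylinder β k true)).trans hβ
    have hδ : (fun i => β' (i + (k + 1))) = δ :=
      funext fun i => Function.update_of_ne (by omega) _ _
    rw [res_add, res_succ, hβ', hδ, show β' k = true from Function.update_self k true β]
  set edge : List Bool → ℕ → ℕ := fun t => (N (t.length + (k + 1))).2 t
  have hedge : IsRefining edge fun t => t.length + (k + 1) :=
    ⟨fun i t => by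
      simpa only [edge, List.length_cons, Nat.add_right_comm _ 1 (k + 1)] using
        ((hN (t.length + (k + 1))).2 i t (by omega)).2, fun _ t => by simp⟩
  have hconf := fun j => (hN _).1.2 (res δ j) k rfl
  refine (huv _ _).2 ⟨branchLimit edge δ,
    hedge.apply_branchLimit_eq hvertex hu (k + 1) fun j => ?_,
    hedge.apply_branchLimit_eq hvertex hv (k + 1) fun j => ?_⟩
  · simpa only [vertex, hres, List.length_append, List.length_cons, hD] using (hconf j).1
  · simpa only [vertex, hres', List.length_append, List.length_cons, hD] using (hconf j).2

end Limit

section Independent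

theorem exists_dense_lists :
    ∃ D : ℕ → List Bool, (∀ n, (D n).length = n) ∧ ∀ s, ∃ n, s <:+ D n := by
  have h : ∀ n, ∃ t : List Bool, t.length = n ∧
      ∀ s : List Bool, Encodable.encode s = n → s <:+ t := by
    intro n
    by_cases hn : ∃ s : List Bool, Encodable.encode s = n
    · obtain ⟨s, rfl⟩ := hn
      refine ⟨List.replicate (Encodable.encode s - s.length) false ++ s, ?_, fun s' hs' => ?_⟩
      · have := Encodable.length_le_encode s
        simp only [List.length_append, List.length_replicate]
        omega
      · rw [Encodable.encode_injective hs']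
        exact List.suffix_append _ _
    · exact ⟨List.replicate n false, List.length_replicate, fun s hs => absurd ⟨s, hs⟩ hn⟩
  choose D hD hsuffix using h
  exact ⟨D, hD, fun s => ⟨_, hsuffix _ s rfl⟩⟩

/-- Flipping entry `k`, as a homeomorphism of the Cantor space. -/
def flipAt (k : ℕ) : (ℕ → Bool) ≃ₜ (ℕ → Bool) where
  toFun β := Function.update β k (!β k)
  invFun β := Function.update β k (!β k)
  left_inv β := by simp
  right_inv β := by simp
  continuous_toFun := continuous_id.update k
    ((continuous_of_discreteTopology (f := not)).comp (continuous_apply k))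
  continuous_invFun := continuous_id.update k
    ((continuous_of_discreteTopology (f := not)).comp (continuous_apply k))

theorem isMeagre_of_independent {D : ℕ → List Bool} (hD : ∀ n, (D n).length = n)
    (hdense : ∀ s, ∃ n, s <:+ D n) {B : Set (ℕ → Bool)} (hB : BaireMeasurableSet B)
    (hindep : ∀ k, ∀ β ∈ B, res β k = D k → β k = false → Function.update β k true ∉ B) :
    IsMeagre B := by
  obtain ⟨O, hO, hBO, hOB⟩ := exists_isOpen_isMeagre_diff hB
  rcases O.eq_empty_or_nonempty with rfl | ⟨β, hβ⟩
  · rwa [sdiff_empty] at hBO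
  obtain ⟨n, -, hn⟩ := (hasBasis_nhds_cylinder β).mem_iff.1 (hO.mem_nhds hβ)
  obtain ⟨k, t, ht⟩ := hdense (res β n)
  have hk : t.length + n = k := by
    simpa only [List.length_append, res_length, hD] using congrArg List.length ht
  have hcyl : ∀ γ, res γ k = D k → γ ∈ O := fun γ hγ => hn (mem_cylinder_iff_res_eq.2 (by
    rw [← hk, res_add, hk, ← ht] at hγ
    exact (List.append_inj' hγ (by simp only [res_length])).2))
  obtain ⟨γ₀, hγ₀⟩ := exists_res_eq (false :: D k)
  rw [List.length_cons, hD] at hγ₀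
  have hsub : cylinder γ₀ (k + 1) ⊆ (O \ B) ∪ flipAt k ⁻¹' (O \ B) := by
    intro γ hγ
    rw [mem_cylinder_iff_res_eq, hγ₀, res_succ, List.cons.injEq] at hγ
    have hflip : flipAt k γ = Function.update γ k true := by
      change Function.update γ k (!γ k) = _
      rw [hγ.1, Bool.not_false]
    have hres : res (Function.update γ k true) k = D k :=
      (mem_cylinder_iff_res_eq.1 (update_mem_cylinder γ k true)).trans hγ.2
    by_cases hγB : γ ∈ B
    · exact .inr (by rw [mem_preimage, hflip]; exact ⟨hcyl _ hres, hindep k γ hγB hγ.2 hγ.1⟩)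
    · exact .inl ⟨hcyl γ hγ.2, hγB⟩
  exact absurd ((hOB.union (hOB.preimage_of_isOpenMap (flipAt k).continuous
    (flipAt k).isOpenMap)).mono hsub)
    (not_isMeagre_of_isOpen (isOpen_cylinder _ γ₀ (k + 1)) ⟨γ₀, self_mem_cylinder _ _⟩)

end Independent

theorem meetsCountablyManyClasses_univ_or_exists_continuous {E : (ℕ → ℕ) → (ℕ → ℕ) → Prop}
    (hE : Equivalence E) (hE_compl : AnalyticSet {p : (ℕ → ℕ) × (ℕ → ℕ) | ¬ E p.1 p.2}) :
    MeetsCountablyManyClasses E univ ∨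
      ∃ c : (ℕ → Bool) → ℕ → ℕ, Continuous c ∧ Pairwise fun α β => ¬ E (c α) (c β) := by
  refine or_iff_not_imp_left.2 fun hmany => ?_
  have hanalytic := hE_compl
  obtain ⟨x, -, y, -, hxy⟩ := exists_not_of_not_meetsCountablyManyClasses hmany
  rw [AnalyticSet] at hE_compl
  obtain hempty | ⟨f, hf, hf_range⟩ := hE_compl
  · exact absurd (show (x, y) ∈ {p : (ℕ → ℕ) × (ℕ → ℕ) | ¬ E p.1 p.2} from hxy) (hempty ▸ id)
  obtain ⟨D, hD, hdense⟩ := exists_dense_lists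
  obtain ⟨h, hh, hhE⟩ := exists_continuous_homomorphism (u := fun w => (f w).1)
    (v := fun w => (f w).2) hD hf.fst hf.snd (fun x y => by
      simpa only [mem_range, Prod.ext_iff, mem_ofPred_eq]
        using (Set.ext_iff.1 hf_range (x, y)).symm) hmany
  have : PolishSpace (ℕ → Bool) := ⟨⟩
  have : PolishSpace ((ℕ → Bool) × (ℕ → Bool)) := ⟨⟩
  set R : Set ((ℕ → Bool) × (ℕ → Bool)) := {p | E (h p.1) (h p.2)}
  have hR : BaireMeasurableSet R := .of_compl <| baireMeasurableSet_of_analyticSet <|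
    hanalytic.preimage (f := Prod.map h h) (hh.prodMap hh)
  have hsection : ∀ α, IsMeagre {β | (α, β) ∈ R} := fun α =>
    isMeagre_of_independent hD hdense
      (.of_compl <| baireMeasurableSet_of_analyticSet <|
        hanalytic.preimage (f := fun β => (h α, h β)) (continuous_const.prodMk hh))
      fun k β hβ hβk hfalse hβ' => hhE k β hβk hfalse (hE.trans (hE.symm hβ) hβ')
  obtain ⟨c, hc, hcR⟩ := exists_continuous_pairwise_mem (isMeagre_of_isMeagre_section hR hsection)
  exact ⟨h ∘ c, hh.comp hc, hcR⟩

theorem meetsCountablyManyClasses_or_exists_continuous {X : Type*} [TopologicalSpace X] [T2Space X]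
    {E : X → X → Prop} (hE : Equivalence E) (hE_compl : AnalyticSet {p : X × X | ¬ E p.1 p.2})
    {S : Set X} (hS : AnalyticSet S) :
    MeetsCountablyManyClasses E S ∨ ∃ c : (ℕ → Bool) → X,
      Continuous c ∧ (∀ α, c α ∈ S) ∧ Pairwise fun α β => ¬ E (c α) (c β) := by
  rw [AnalyticSet] at hS
  obtain rfl | ⟨q, hq, rfl⟩ := hS
  · exact .inl (isSigmaIdeal_meetsCountablyManyClasses E).empty
  refine (meetsCountablyManyClasses_univ_or_exists_continuous (hE.comap q)
    (hE_compl.preimage (f := Prod.map q q) (hq.prodMap hq))).imp ?_ ?_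
  · rintro ⟨D, hD, hDE⟩
    refine ⟨q '' D, hD.image q, forall_mem_range.2 fun α => ?_⟩
    obtain ⟨d, hd, hdα⟩ := hDE α (mem_univ α)
    exact ⟨q d, mem_image_of_mem q hd, hdα⟩
  · rintro ⟨c, hc, hcE⟩
    exact ⟨q ∘ c, hq.comp hc, fun α => mem_range_self _, hcE⟩

/-! ### Schemes inside the fibres of a map -/

section FibreSchemes

variable {g : (ℕ → ℕ) → ℕ → ℕ} {q₁ q₂ : (ℕ → ℕ) → ℕ → ℕ} {T : List ℕ → Node}

theorem eventually_box_eq (T : List ℕ → Node) (s : List ℕ) :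
    ∀ᶠ T' in 𝓝 T, (T' s).box = (T s).box := by
  have hpoint : Continuous fun T : List ℕ → Node => (T s).point := by fun_prop
  have hdepth : Continuous fun T : List ℕ → Node => (T s).depth := by fun_prop
  filter_upwards [hpoint.tendsto T ((isOpen_cylinder _ _ (T s).depth).mem_nhds
    (self_mem_cylinder _ _)), eventually_eq_of_continuous hdepth T] with T' hT' hdepth'
  rw [Node.box, hdepth']
  exact mem_cylinder_iff_eq.1 hT'

theorem isClosed_isScheme (hg : Continuous g) : IsClosed {T : List ℕ → Node | IsScheme g T} := by
  refine isClosed_iff_frequently.2 fun T hT => ?_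
  have hbox := eventually_box_eq T
  have hdepth : ∀ s, ∀ᶠ T' in 𝓝 T, (T' s).depth = (T s).depth := fun s =>
    eventually_eq_of_continuous (f := fun T : List ℕ → Node => (T s).depth) (by fun_prop) T
  have hcoord : ∀ s, ∀ᶠ T' in 𝓝 T, (T' s).coord = (T s).coord := fun s =>
    eventually_eq_of_continuous (f := fun T : List ℕ → Node => (T s).coord) (by fun_prop) T
  have hvalue : ∀ s l, ∀ᶠ T' in 𝓝 T, g (T' s).point l = g (T s).point l := fun s l =>
    eventually_eq_of_continuous (f := fun T : List ℕ → Node => g (T s).point l) (by fun_prop) T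
  refine ⟨⟨fun k s => ?_, fun k s => ?_⟩, fun k s c hc => ?_, fun s k k' hk => ?_⟩
  · obtain ⟨T', hT', h, hcons⟩ := (hT.and_eventually ((hbox s).and (hbox (k :: s)))).exists
    have hsub : (T' (k :: s)).box ⊆ (T' s).box := by
      rw [Node.box, Node.box, ← mem_cylinder_iff_eq.1 (hT'.refining.mem k s)]
      exact cylinder_anti _ (hT'.refining.lt k s).le
    rw [hcons, h] at hsub
    exact hsub (self_mem_cylinder _ _)
  · obtain ⟨T', hT', h, hcons⟩ := (hT.and_eventually ((hdepth s).and (hdepth (k :: s)))).exists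
    simpa only [h, hcons] using hT'.refining.lt k s
  · obtain ⟨T', hT', h, hcons, hval⟩ := (hT.and_eventually ((hcoord s).and
      ((hbox (k :: s)).and (hvalue (k :: s) (T s).coord)))).exists
    rw [← hval, ← h]
    exact hT'.const k s c (hcons ▸ hc)
  · obtain ⟨T', hT', h, hval, hval'⟩ := (hT.and_eventually ((hcoord s).and
      ((hvalue (k :: s) (T s).coord).and (hvalue (k' :: s) (T s).coord)))).exists
    refine hT'.inj s ?_
    simpa only [h, hval, hval'] using hk

/-- The schemes for `q₂` inside a single fibre of `q₁`. -/
def fibreSchemes (q₁ q₂ : (ℕ → ℕ) → ℕ → ℕ) : Set (List ℕ → Node) :=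
  {T | IsScheme q₂ T ∧ ∀ s, q₁ (T s).point = q₁ (T []).point}

theorem isClosed_fibreSchemes (hq₁ : Continuous q₁) (hq₂ : Continuous q₂) :
    IsClosed (fibreSchemes q₁ q₂) := by
  have hroot : IsClosed {T : List ℕ → Node | ∀ s, q₁ (T s).point = q₁ (T []).point} := by
    simp only [ofPred_forall]
    exact isClosed_iInter fun s => isClosed_eq (by fun_prop) (by fun_prop)
  exact (isClosed_isScheme hq₂).inter hroot

theorem apply_treeLimit_of_mem_fibreSchemes (hq₁ : Continuous q₁) (hT : T ∈ fibreSchemes q₁ q₂)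
    (α : ℕ → ℕ) : q₁ (treeLimit T α) = q₁ (T []).point :=
  tendsto_nhds_unique ((hq₁.tendsto _).comp (hT.1.refining.tendsto_branchLimit α))
    (tendsto_const_nhds.congr fun n => (hT.2 (res α n)).symm)

theorem exists_isSplitting_of_continuous_isScheme (hg : Continuous g)
    {θ : (ℕ → Bool) → List ℕ → Node} (hθ : Continuous θ) (h : ∀ y, IsScheme g (θ y)) :
    ∃ (Y : (ℕ → ℕ) → ℕ → Bool) (a : (ℕ → ℕ) → ℕ → ℕ), Function.Injective Y ∧
      (Continuous fun α => g (treeLimit (θ (Y α)) (a α))) ∧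
      IsSplitting fun α => g (treeLimit (θ (Y α)) (a α)) := by
  have heval : Continuous fun p : (ℕ → ℕ) × ℕ => p.1 p.2 :=
    continuous_prod_of_discrete_right.2 continuous_apply
  have hvalue : ∀ s k, Continuous fun y => g (θ y (k :: s)).point (θ y s).coord := fun s k =>
    heval.comp (show Continuous fun y => (g (θ y (k :: s)).point, (θ y s).coord) by fun_prop)
  obtain ⟨Y, a, L, V, hY, hY_inj, ha, hV, hLV⟩ :=
    exists_continuous_selection (l := fun y s => (θ y s).coord) (fun s => by fun_prop) hvalue
      fun y s => (h y).inj s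
  have happly : ∀ α n, ∀ β ∈ cylinder α n,
      g (treeLimit (θ (Y β)) (a β)) (L (res α n)) = V (res α n) (β n) := fun α n β hβ => by
    rw [← mem_cylinder_iff_res_eq.1 hβ, ← (hLV β n).1, (h (Y β)).apply_treeLimit, (hLV β n).2]
  refine ⟨Y, a, hY_inj, ?_, fun α n => ⟨L (res α n), fun β hβ γ hγ hβγ => hV (res α n) ?_⟩⟩
  · exact hg.comp (continuous_uncurry_branchLimit.comp
      ((show Continuous fun α s => (θ (Y α) s).point by fun_prop).prodMk ha))
  · rw [← happly α n β hβ, ← happly α n γ hγ]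
    exact hβγ

end FibreSchemes

/-! ### The dichotomy -/

section Dichotomy

/-- Some superperfect subset of `A`, given by a continuous splitting parametrization, consists of
pairwise `E`-inequivalent points. -/
def HasInequivalentSplitting (E : (ℕ → ℕ) → (ℕ → ℕ) → Prop) (A : Set (ℕ → ℕ)) : Prop :=
  ∃ p : (ℕ → ℕ) → ℕ → ℕ, Continuous p ∧ IsSplitting p ∧ (∀ α, p α ∈ A) ∧
    Pairwise fun α β => ¬ E (p α) (p β)

variable {E : (ℕ → ℕ) → (ℕ → ℕ) → Prop} {A : Set (ℕ → ℕ)}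

theorem HasInequivalentSplitting.mono {B : Set (ℕ → ℕ)} (h : HasInequivalentSplitting E A)
    (hAB : A ⊆ B) : HasInequivalentSplitting E B :=
  h.imp fun _ hp => ⟨hp.1, hp.2.1, fun α => hAB (hp.2.2.1 α), hp.2.2.2⟩

theorem meetsCountablyManyClasses_fibreSchemes_or_hasInequivalentSplitting (hE : Equivalence E)
    (hE_compl : AnalyticSet {p : (ℕ → ℕ) × (ℕ → ℕ) | ¬ E p.1 p.2}) {q₁ q₂ : (ℕ → ℕ) → ℕ → ℕ}
    (hq₁ : Continuous q₁) (hq₂ : Continuous q₂) (hq : ∀ b, E (q₁ b) (q₂ b)) :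
    MeetsCountablyManyClasses (fun T T' => E (q₁ (T []).point) (q₁ (T' []).point))
      (fibreSchemes q₁ q₂) ∨ HasInequivalentSplitting E (range q₂) := by
  have : PolishSpace (List ℕ → Node) := ⟨⟩
  have : SecondCountableTopology (List ℕ → Node) := inferInstance
  have : PolishSpace ((List ℕ → Node) × (List ℕ → Node)) := ⟨⟩
  have hroot : AnalyticSet {p : (List ℕ → Node) × (List ℕ → Node) |
      ¬ E (q₁ (p.1 []).point) (q₁ (p.2 []).point)} := hE_compl.preimage
    (f := fun p : (List ℕ → Node) × (List ℕ → Node) => (q₁ (p.1 []).point, q₁ (p.2 []).point))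
    (by fun_prop)
  refine (meetsCountablyManyClasses_or_exists_continuous (hE.comap fun T => q₁ (T []).point)
    hroot (isClosed_fibreSchemes hq₁ hq₂).analyticSet).imp_right ?_
  rintro ⟨c, hc, hmem, hcE⟩
  obtain ⟨Y, a, hY, hcont, hsplit⟩ :=
    exists_isSplitting_of_continuous_isScheme hq₂ hc fun y => (hmem y).1
  refine ⟨_, hcont, hsplit, fun α => mem_range_self _, fun α β hαβ h => ?_⟩
  have hE_root : ∀ α, E (q₁ (c (Y α) []).point) (q₂ (treeLimit (c (Y α)) (a α))) := fun α => by
    rw [← apply_treeLimit_of_mem_fibreSchemes hq₁ (hmem (Y α)) (a α)]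
    exact hq _
  exact hcE (hY.ne hαβ) (hE.trans (hE_root α) (hE.trans h (hE.symm (hE_root β))))

theorem not_isSigmaBounded_image_of_residual_unboundedKernel {X : Type*} [TopologicalSpace X]
    [PolishSpace X] {g : X → ℕ → ℕ} (hg : Continuous g) {C : Set X} (hC : IsClosed C)
    (h : ¬ IsSigmaBounded (g '' C)) {G : Set (unboundedKernel g C)} (hG : G ∈ residual _) :
    ¬ IsSigmaBounded ((fun y => g y.1) '' G) := by
  have := (isClosed_unboundedKernel (g := g) hC).polishSpace
  let _ := TopologicalSpace.upgradeIsCompletelyMetrizable (unboundedKernel g C)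
  have := (unboundedKernel_nonempty h).to_subtype
  refine not_isSigmaBounded_image_of_residual (by fun_prop) ?_ hG
  rintro _ ⟨V, hV, rfl⟩ ⟨y, hy⟩
  obtain ⟨l, -, hl⟩ := exists_unbounded_coordinate_nhds y.2 (hV.mem_nhds hy) 0
  refine ⟨l, fun M => ?_⟩
  obtain ⟨c, ⟨hc, hcV⟩, hM⟩ := hl M
  exact ⟨⟨c, hc⟩, hcV, hM⟩

theorem exists_isSplitting_frequently_lt {F : Type*} [TopologicalSpace F] [PolishSpace F]
    {h φ : F → ℕ → ℕ} (hh : Continuous h)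
    (hunbdd : ∀ G ∈ residual F, ¬ IsSigmaBounded (h '' G)) {G : Set F} (hG : G ∈ residual F)
    (hφ : ContinuousOn φ G) :
    ∃ y : (ℕ → ℕ) → F, (∀ α, y α ∈ G) ∧ (Continuous fun α => h (y α)) ∧
      IsSplitting (fun α => h (y α)) ∧
      ∀ α β, α ≠ β → ∃ᶠ i in atTop, φ (y β) i < h (y α) i := by
  obtain ⟨G₀, hG₀G, hG₀, hG₀_dense⟩ := mem_residual.1 hG
  have hG₀_analytic : AnalyticSet G₀ := by
    borelize F
    exact hG₀.measurableSet.analyticSet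
  have hG₀_unbdd := hunbdd G₀ (residual_of_dense_Gδ hG₀ hG₀_dense)
  rw [AnalyticSet] at hG₀_analytic
  obtain rfl | ⟨θ, hθ, rfl⟩ := hG₀_analytic
  · exact absurd ⟨0, by simp⟩ hG₀_unbdd
  have hθG : ∀ a, θ a ∈ G := fun a => hG₀G (mem_range_self a)
  obtain ⟨T, hT, -, hlt⟩ := exists_isScheme_frequently_lt (g := h ∘ θ) (C := univ) (hh.comp hθ)
    (hφ.comp_continuous hθ hθG) (by rwa [image_comp, image_univ])
  exact ⟨fun α => θ (treeLimit T α), fun α => hθG _,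
    hh.comp (hθ.comp (continuous_branchLimit _)), hT.isSplitting, hlt⟩

theorem hasInequivalentSplitting_of_isSigmaBounded_section (hE : Equivalence E)
    (hE_analytic : AnalyticSet {p : (ℕ → ℕ) × (ℕ → ℕ) | E p.1 p.2}) (hA : AnalyticSet A)
    (hA_unbdd : ¬ IsSigmaBounded A) (hsec : ∀ x ∈ A, IsSigmaBounded {z ∈ A | E x z}) :
    HasInequivalentSplitting E A := by
  have hA' := hA
  rw [AnalyticSet] at hA'
  obtain rfl | ⟨f, hf, hf_range⟩ := hA'
  · exact absurd ⟨0, by simp⟩ hA_unbdd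
  have hfA : ∀ a, f a ∈ A := fun a => hf_range ▸ mem_range_self a
  set F := unboundedKernel f univ
  have : PolishSpace F := (isClosed_unboundedKernel isClosed_univ).polishSpace
  have hS : AnalyticSet {p : F × (ℕ → ℕ) | p.2 ∈ A ∧ E (f p.1) p.2} :=
    analyticSet_inter (hA.preimage continuous_snd)
      (hE_analytic.preimage (f := fun p : F × (ℕ → ℕ) => (f p.1, p.2)) (by fun_prop))
  obtain ⟨φ, G, hG, hφ, hdom⟩ :=
    exists_residual_forall_section_eventuallyLE hS fun y => hsec (f y) (hfA y)
  obtain ⟨y, hyG, hcont, hsplit, hlt⟩ := exists_isSplitting_frequently_lt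
    (h := fun y : F => f y) (by fun_prop)
    (fun _ => not_isSigmaBounded_image_of_residual_unboundedKernel hf isClosed_univ
      (by rwa [image_univ, hf_range])) hG hφ
  refine ⟨fun α => f (y α), hcont, hsplit, fun α => hfA _, fun α β hαβ h => hlt α β hαβ ?_⟩
  filter_upwards [hdom (y β) (hyG β) (f (y α)) ⟨hfA _, hE.symm h⟩] with i hi
  exact hi.not_gt

theorem isSigmaBounded_section_or_exists_mem_fibreSchemes {q : (ℕ → ℕ) → (ℕ → ℕ) × (ℕ → ℕ)}
    (hq : Continuous q) (x : ℕ → ℕ) :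
    IsSigmaBounded {z | (x, z) ∈ range q} ∨
      ∃ T ∈ fibreSchemes (fun b => (q b).1) fun b => (q b).2, (q (T []).point).1 = x := by
  refine or_iff_not_imp_left.2 fun hunbdd => ?_
  have hC : ¬ IsSigmaBounded ((fun b => (q b).2) '' {b | (q b).1 = x}) := by
    refine fun h => hunbdd (h.mono ?_)
    rintro z ⟨b, hb⟩
    exact ⟨b, by simp only [hb, mem_ofPred_eq], by simp only [hb]⟩
  obtain ⟨T, hT, hTx, -⟩ := exists_isScheme_frequently_lt hq.snd (continuous_const (y := 0)) hC
  exact ⟨T, ⟨hT, fun s => (hTx s).trans (hTx []).symm⟩, hTx []⟩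

theorem exists_isSigmaBounded_diff_or_hasInequivalentSplitting (hE : Equivalence E)
    (hE_meas : MeasurableSet {p : (ℕ → ℕ) × (ℕ → ℕ) | E p.1 p.2}) (hA : AnalyticSet A) :
    (∃ f : ℕ → ℕ → ℕ, IsSigmaBounded (A \ ⋃ n, {x | E (f n) x})) ∨
      HasInequivalentSplitting E A := by
  have hS : AnalyticSet {p : (ℕ → ℕ) × (ℕ → ℕ) | (p.1 ∈ A ∧ p.2 ∈ A) ∧ E p.1 p.2} :=
    analyticSet_inter (analyticSet_inter (hA.preimage continuous_fst) (hA.preimage continuous_snd))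
      hE_meas.analyticSet
  rw [AnalyticSet] at hS
  obtain hempty | ⟨q, hq, hq_range⟩ := hS
  · refine .inl ⟨fun _ => 0, 0, fun x hx => absurd ?_ (notMem_empty (x, x))⟩
    exact hempty ▸ ⟨⟨hx.1, hx.1⟩, hE.refl x⟩
  have hq_mem : ∀ b, ((q b).1 ∈ A ∧ (q b).2 ∈ A) ∧ E (q b).1 (q b).2 := fun b =>
    hq_range.subset (mem_range_self b)
  obtain ⟨𝒟, h𝒟, h𝒟E⟩ | hsplit := meetsCountablyManyClasses_fibreSchemes_or_hasInequivalentSplitting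
    hE hE_meas.compl.analyticSet hq.fst hq.snd fun b => (hq_mem b).2
  swap
  · exact .inr (hsplit.mono (range_subset_iff.2 fun b => (hq_mem b).1.2))
  obtain ⟨d, hd⟩ := countable_iff_exists_subset_range.1 h𝒟
  set B := A \ ⋃ n, {x | E (q (d n []).point).1 x}
  by_cases hB : IsSigmaBounded B
  · exact .inl ⟨_, hB⟩
  have hB_analytic : AnalyticSet B := analyticSet_inter hA
    (MeasurableSet.iUnion fun n => measurable_prodMk_left hE_meas).compl.analyticSet
  refine .inr ((hasInequivalentSplitting_of_isSigmaBounded_section hE hE_meas.analyticSet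
    hB_analytic hB fun x hx => ?_).mono sdiff_subset)
  obtain hbdd | ⟨T, hT, hTx⟩ := isSigmaBounded_section_or_exists_mem_fibreSchemes hq x
  · exact hbdd.mono fun z hz => hq_range.symm.subset ⟨⟨hx.1, hz.1.1⟩, hz.2⟩
  · obtain ⟨T', hT', hT'E⟩ := h𝒟E T hT
    obtain ⟨n, rfl⟩ := hd hT'
    exact absurd (mem_iUnion.2 ⟨n, hTx ▸ hT'E⟩) hx.2

end Dichotomy

end SuperperfectDichotomy

open SuperperfectDichotomy

theorem stmt_15 (E : (ℕ → ℕ) → (ℕ → ℕ) → Prop) (hEquiv : Equivalence E)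
    (hE : MeasurableSet {p : (ℕ → ℕ) × (ℕ → ℕ) | E p.1 p.2})
    (A : Set (ℕ → ℕ)) (hA : MeasureTheory.AnalyticSet A) :
    (∃ f : ℕ → (ℕ → ℕ), ∃ B : Set (ℕ → ℕ),
      (∃ K : ℕ → Set (ℕ → ℕ), (∀ n, IsCompact (K n)) ∧ B ⊆ ⋃ n, K n) ∧
      A ⊆ B ∪ ⋃ n, {x : ℕ → ℕ | E (f n) x}) ∨
    (∃ P : Set (ℕ → ℕ), P ⊆ A ∧ IsClosed P ∧ Nonempty (P ≃ₜ (ℕ → ℕ)) ∧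
      ∀ x ∈ P, ∀ y ∈ P, x ≠ y → ¬ E x y) := by
  refine (exists_isSigmaBounded_diff_or_hasInequivalentSplitting hEquiv hE hA).imp ?_ ?_
  · rintro ⟨f, hf⟩
    exact ⟨f, _, hf.exists_isCompact_cover, by rw [sdiff_union_self]; exact subset_union_left⟩
  · rintro ⟨p, hp, hsplit, hpA, hpE⟩
    have hclosed := hsplit.isClosedEmbedding hp
    refine ⟨range p, range_subset_iff.2 hpA, hclosed.isClosed_range,
      ⟨hclosed.isEmbedding.toHomeomorph.symm⟩, ?_⟩
    rintro _ ⟨α, rfl⟩ _ ⟨β, rfl⟩ hne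
    exact hpE fun h => hne (congrArg p h)
end
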